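/- For every long knot f, every ε > 0 and every 2-form η as specified, the configuration space integrals I_X(f) and I_Y(f) converge absolutely. -/

import Mathlib

open MeasureTheory Filter Topology Set

noncomputable section

abbrev E2 : Type := EuclideanSpace ℝ (Fin 2)
abbrev E3 : Type := EuclideanSpace ℝ (Fin 3)
abbrev E4 : Type := EuclideanSpace ℝ (Fin 4)
abbrev E6 : Type := EuclideanSpace ℝ (Fin 6)

/-- The point of `ℝ³` with the given coordinates. -/
def mk3 (x y z : ℝ) : E3 := (WithLp.equiv 2 (Fin 3 → ℝ)).symm ![x, y, z]

/-- The north pole `N = (0,0,1)` of `S² ⊆ ℝ³`. -/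
def NP : E3 := mk3 0 0 1

/-- Projection of `ℝ³` onto the plane `N^⊥` (the first two coordinates). -/
def pr12 (v : E3) : ℝ × ℝ := (v 0, v 1)

/-- The `N`-coordinate. -/
def pr3 (v : E3) : ℝ := v 2

/-- `unitv v = v / ‖v‖`. -/
def unitv (v : E3) : E3 := ‖v‖⁻¹ • v

/-- Determinant of the projections to `N^⊥` of two vectors (first vector, then second). -/
def cross2 (a b : E3) : ℝ := a 0 * b 1 - a 1 * b 0

/-- 3×3 determinant (scalar triple product); for `p ∈ S²` and `v, w` tangent to `S²` at
`p`, this is the value of the standard area form of `S²` at `p` on `(v, w)`. -/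
def det3 (p v w : E3) : ℝ :=
  p 0 * (v 1 * w 2 - v 2 * w 1) - p 1 * (v 0 * w 2 - v 2 * w 0) +
    p 2 * (v 0 * w 1 - v 1 * w 0)

/-! ### Long knots and 3-component long links -/

/-- A long knot: a smooth embedding `ℝ ↪ ℝ³` which is standard outside `[-1,1]`. -/
def IsLongKnot (f : ℝ → E3) : Prop :=
  ContDiff ℝ (⊤ : ℕ∞) f ∧ Function.Injective f ∧ (∀ t, deriv f t ≠ 0) ∧
    ∀ x : ℝ, 1 ≤ |x| → f x = mk3 x 0 0

/-- Smooth isotopy of long knots. -/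
def KnotIsotopic (f₀ f₁ : ℝ → E3) : Prop :=
  ∃ H : ℝ → ℝ → E3,
    ContDiff ℝ (⊤ : ℕ∞) (fun p : ℝ × ℝ => H p.1 p.2) ∧
    (∀ s, IsLongKnot (H s)) ∧ H 0 = f₀ ∧ H 1 = f₁

/-- A 3-component long link: a smooth embedding `ℝ ⊔ ℝ ⊔ ℝ ↪ ℝ³`, standard outside
`[-1,1]`, component `k` (for `k = 1,2,3`, i.e. index `i = k - 1 : Fin 3`) having ends
`x ↦ (x, (2 - k)|x|, 0)`. -/
def IsLongLink3 (f : Fin 3 → ℝ → E3) : Prop :=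
  (∀ i, ContDiff ℝ (⊤ : ℕ∞) (f i)) ∧
  (∀ i j s t, f i s = f j t → i = j ∧ s = t) ∧
  (∀ i t, deriv (f i) t ≠ 0) ∧
  ∀ i (x : ℝ), 1 ≤ |x| → f i x = mk3 x ((1 - ((i : ℕ) : ℝ)) * |x|) 0

/-- Smooth isotopy of 3-component long links. -/
def LinkIsotopic (f₀ f₁ : Fin 3 → ℝ → E3) : Prop :=
  ∃ H : ℝ → Fin 3 → ℝ → E3,
    (∀ i, ContDiff ℝ (⊤ : ℕ∞) (fun p : ℝ × ℝ => H p.1 i p.2)) ∧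
    (∀ s, IsLongLink3 (H s)) ∧ H 0 = f₀ ∧ H 1 = f₁

/-! ### Diagrams, crossings and Gauss diagram pairings -/

/-- All self-intersections of the projection of the long knot `f` are transverse
(any two branches meeting at a multiple point have independent projected tangents). -/
def TransverseK (f : ℝ → E3) : Prop :=
  ∀ t u, t ≠ u → pr12 (f t) = pr12 (f u) → cross2 (deriv f t) (deriv f u) ≠ 0

/-- The diagram of `f` has only transverse double points. -/
def OnlyDoubleK (f : ℝ → E3) : Prop :=
  TransverseK f ∧
  ∀ t u v : ℝ, t ≠ u → u ≠ v → t ≠ v →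
    pr12 (f t) = pr12 (f u) → pr12 (f u) = pr12 (f v) → False

/-- All self-intersections of the projection of the long link `f` are transverse. -/
def TransverseL (f : Fin 3 → ℝ → E3) : Prop :=
  ∀ i j s t, (i, s) ≠ (j, t) → pr12 (f i s) = pr12 (f j t) →
    cross2 (deriv (f i) s) (deriv (f j) t) ≠ 0

/-- The diagram of the long link `f` has only transverse double points. -/
def OnlyDoubleL (f : Fin 3 → ℝ → E3) : Prop :=
  TransverseL f ∧
  ∀ i j k s t u, (i, s) ≠ (j, t) → (j, t) ≠ (k, u) → (i, s) ≠ (k, u) →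
    pr12 (f i s) = pr12 (f j t) → pr12 (f j t) = pr12 (f k u) → False

/-- Crossings of a long knot diagram: pairs `(t, u)` with `t` on the lower and `u` on the
upper strand; the corresponding chord of the Gauss diagram is directed from `t` to `u`. -/
def CrossingK (f : ℝ → E3) : Set (ℝ × ℝ) :=
  {p | p.1 ≠ p.2 ∧ pr12 (f p.1) = pr12 (f p.2) ∧ pr3 (f p.1) < pr3 (f p.2)}

/-- The sign of the crossing `p = (t, u)` (`+1` iff the projected tangent of the
over-strand followed by that of the under-strand is a positive basis of `N^⊥`). -/
def csignK (f : ℝ → E3) (p : ℝ × ℝ) : ℝ :=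
  Real.sign (cross2 (deriv f p.2) (deriv f p.1))

/-- Gauss diagram pairing for a long knot: the sum, over all pairs of chords of the Gauss
diagram of `f` in the relative position prescribed by `R`, of the products of signs. -/
def pairK (f : ℝ → E3) (R : ℝ × ℝ → ℝ × ℝ → Prop) : ℝ :=
  ∑ᶠ q ∈ {q : (ℝ × ℝ) × (ℝ × ℝ) | q.1 ∈ CrossingK f ∧ q.2 ∈ CrossingK f ∧ R q.1 q.2},
    csignK f q.1 * csignK f q.2

/-- `⟨X, G_D⟩` : chords `x₁ → x₃` and `x₄ → x₂` with `x₁ < x₂ < x₃ < x₄`. -/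
def pairXK (f : ℝ → E3) : ℝ :=
  pairK f fun p q => p.1 < q.2 ∧ q.2 < p.2 ∧ p.2 < q.1

/-- `⟨X′₁, G_D⟩` : chords `a → b` and `c → a` with `a < b < c`. -/
def pairX1K (f : ℝ → E3) : ℝ :=
  pairK f fun p q => q.2 = p.1 ∧ p.1 < p.2 ∧ p.2 < q.1

/-- `⟨X′₂, G_D⟩` : chords `a → b` and `c → b` with `a < b < c`. -/
def pairX2K (f : ℝ → E3) : ℝ :=
  pairK f fun p q => q.2 = p.2 ∧ p.1 < p.2 ∧ p.2 < q.1

/-- `⟨X′₃, G_D⟩` : chords `a → c` and `c → b` with `a < b < c`. -/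
def pairX3K (f : ℝ → E3) : ℝ :=
  pairK f fun p q => p.2 = q.1 ∧ p.1 < q.2 ∧ q.2 < p.2

/-- Crossings of a 3-strand diagram between strand `i` (under) and strand `j` (over);
the corresponding chord is directed from `p.1` on strand `i` to `p.2` on strand `j`. -/
def CrossingL (f : Fin 3 → ℝ → E3) (i j : Fin 3) : Set (ℝ × ℝ) :=
  {p | pr12 (f i p.1) = pr12 (f j p.2) ∧ pr3 (f i p.1) < pr3 (f j p.2)}

/-- The sign of the crossing `p` between strand `i` (under) and strand `j` (over). -/
def csignL (f : Fin 3 → ℝ → E3) (i j : Fin 3) (p : ℝ × ℝ) : ℝ :=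
  Real.sign (cross2 (deriv (f j) p.2) (deriv (f i) p.1))

/-- Gauss diagram pairing for a 3-component long link. -/
def pairL (f : Fin 3 → ℝ → E3) (i₁ j₁ i₂ j₂ : Fin 3) (R : ℝ × ℝ → ℝ × ℝ → Prop) : ℝ :=
  ∑ᶠ q ∈ {q : (ℝ × ℝ) × (ℝ × ℝ) |
      q.1 ∈ CrossingL f i₁ j₁ ∧ q.2 ∈ CrossingL f i₂ j₂ ∧ R q.1 q.2},
    csignL f i₁ j₁ q.1 * csignL f i₂ j₂ q.2

/-- `⟨𝒳₁, G_D⟩` : a chord from `t` on strand 1 to strand 2, and a chord from strand 3 to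
`t′` on strand 1, with `t < t′`. -/
def pairL1 (f : Fin 3 → ℝ → E3) : ℝ := pairL f 0 1 2 0 fun p q => p.1 < q.2

/-- `⟨𝒳₂, G_D⟩` : a chord from strand 1 to `u` on strand 2, and a chord from strand 3 to
`u′` on strand 2, with `u < u′`. -/
def pairL2 (f : Fin 3 → ℝ → E3) : ℝ := pairL f 0 1 2 1 fun p q => p.2 < q.2

/-- `⟨𝒳₃, G_D⟩` : a chord from strand 1 to `v` on strand 3, and a chord from `v′` on
strand 3 to strand 2, with `v < v′`. -/
def pairL3 (f : Fin 3 → ℝ → E3) : ℝ := pairL f 0 2 2 1 fun p q => p.2 < q.1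

/-- `⟨𝒳′₁, G_D⟩` : as `𝒳₁` but with `t = t′` (a triple point). -/
def pairL1' (f : Fin 3 → ℝ → E3) : ℝ := pairL f 0 1 2 0 fun p q => p.1 = q.2

/-- `⟨𝒳′₂, G_D⟩` : as `𝒳₂` but with `u = u′` (a triple point). -/
def pairL2' (f : Fin 3 → ℝ → E3) : ℝ := pairL f 0 1 2 1 fun p q => p.2 = q.2

/-- `⟨𝒳′₃, G_D⟩` : as `𝒳₃` but with `v = v′` (a triple point). -/
def pairL3' (f : Fin 3 → ℝ → E3) : ℝ := pairL f 0 2 2 1 fun p q => p.2 = q.1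

/-! ### The localized unit 2-form `η` on `S²` -/

/-- The action of a 2×2 matrix on `ℝ³ = ℝ² × ℝ`, acting on the first two coordinates. -/
def act2 (A : Matrix (Fin 2) (Fin 2) ℝ) (v : E3) : E3 :=
  mk3 (A 0 0 * v 0 + A 0 1 * v 1) (A 1 0 * v 0 + A 1 1 * v 1) (v 2)

/-- `IsEtaForm ε g` says that `η = g · (standard area form of S²)` is a smooth 2-form on
`S²` such that: (i) `supp η` lies in the `ε`-neighbourhood of the north pole `N`;
(ii) `φ*η = det φ · η` for every `φ ∈ O(2) ⊆ O(3)` (since `φ* (area form) = det φ ·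
(area form)`, this amounts to `g ∘ φ = g`); (iii) `∫_{S²} η = 1`, i.e. the integral of
`g` against the surface measure of `S²` is `1`. -/
def IsEtaForm (ε : ℝ) (g : E3 → ℝ) : Prop :=
  ContDiff ℝ (⊤ : ℕ∞) g ∧
  (∀ v : E3, ‖v‖ = 1 → g v ≠ 0 → ‖v - NP‖ < ε) ∧
  (∀ A : Matrix (Fin 2) (Fin 2) ℝ, A * A.transpose = 1 →
    ∀ v : E3, ‖v‖ = 1 → g (act2 A v) = g v) ∧
  ∫ v : Metric.sphere (0 : E3) 1, g v ∂((volume : Measure E3).toSphere) = 1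

/-! ### Configuration space integrals -/

/-- `i`-th partial derivative of a map `ℝⁿ → ℝ³`. -/
def pdv {n : ℕ} (h : EuclideanSpace ℝ (Fin n) → E3) (i : Fin n)
    (x : EuclideanSpace ℝ (Fin n)) : E3 :=
  fderiv ℝ h x (EuclideanSpace.single i 1)

/-- The pullback `h*η` (for `η = g · (area form)`) evaluated at the point `x` on the
coordinate vectors `(e_i, e_j)`. -/
def form2 {n : ℕ} (g : E3 → ℝ) (h : EuclideanSpace ℝ (Fin n) → E3)
    (x : EuclideanSpace ℝ (Fin n)) (i j : Fin n) : ℝ :=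
  g (h x) * det3 (h x) (pdv h i x) (pdv h j x)

/-- `(h*η ∧ k*η)(e₀, e₁, e₂, e₃)` at `x`. -/
def wedge22 (g : E3 → ℝ) (h k : E4 → E3) (x : E4) : ℝ :=
  (1 / 4) * ∑ σ : Equiv.Perm (Fin 4),
    ((Equiv.Perm.sign σ : ℤ) : ℝ) * form2 g h x (σ 0) (σ 1) * form2 g k x (σ 2) (σ 3)

/-- `(h*η ∧ k*η ∧ l*η)(e₀, …, e₅)` at `x`. -/
def wedge222 (g : E3 → ℝ) (h k l : E6 → E3) (x : E6) : ℝ :=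
  (1 / 8) * ∑ σ : Equiv.Perm (Fin 6),
    ((Equiv.Perm.sign σ : ℤ) : ℝ) * form2 g h x (σ 0) (σ 1) * form2 g k x (σ 2) (σ 3) *
      form2 g l x (σ 4) (σ 5)

/-- The configuration space `C_X = {x₁ < x₂ < x₃ < x₄}`. -/
def CX : Set E4 := {x | x 0 < x 1 ∧ x 1 < x 2 ∧ x 2 < x 3}

/-- The integrand `ω_X = h₁₃*η ∧ h₄₂*η` for a long knot. -/
def omegaX (f : ℝ → E3) (g : E3 → ℝ) : E4 → ℝ :=
  wedge22 g (fun x => unitv (f (x 2) - f (x 0))) (fun x => unitv (f (x 1) - f (x 3)))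

/-- The configuration space integral `I_X(f)` of a long knot. -/
def IX (f : ℝ → E3) (g : E3 → ℝ) : ℝ := ∫ x in CX, omegaX f g x

/-- The free point `x₄ ∈ ℝ³` in a `Y`-configuration `(x₁,x₂,x₃;x₄) ∈ ℝ³ × ℝ³ = ℝ⁶`. -/
def ptY (x : E6) : E3 := mk3 (x 3) (x 4) (x 5)

/-- The configuration space `C_Y(f)` for a long knot. -/
def CY (f : ℝ → E3) : Set E6 :=
  {x | x 0 < x 1 ∧ x 1 < x 2 ∧ ptY x ≠ f (x 0) ∧ ptY x ≠ f (x 1) ∧ ptY x ≠ f (x 2)}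

/-- The integrand `ω_Y = h₁₄*η ∧ h₄₂*η ∧ h₃₄*η` for a long knot. -/
def omegaY (f : ℝ → E3) (g : E3 → ℝ) : E6 → ℝ :=
  wedge222 g (fun x => unitv (ptY x - f (x 0))) (fun x => unitv (f (x 1) - ptY x))
    (fun x => unitv (ptY x - f (x 2)))

/-- The configuration space integral `I_Y(f)` of a long knot. -/
def IY (f : ℝ → E3) (g : E3 → ℝ) : ℝ := ∫ x in CY f, omegaY f g x

def CL1 : Set E4 := {x | x 0 < x 1}
def CL2 : Set E4 := {x | x 1 < x 2}
def CL3 : Set E4 := {x | x 2 < x 3}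

/-- The integrand of `I_{𝒳₁}(f)` for a 3-component long link. -/
def omegaL1 (f : Fin 3 → ℝ → E3) (g : E3 → ℝ) : E4 → ℝ :=
  wedge22 g (fun x => unitv (f 1 (x 2) - f 0 (x 0))) (fun x => unitv (f 2 (x 3) - f 0 (x 1)))

/-- The integrand of `I_{𝒳₂}(f)` for a 3-component long link. -/
def omegaL2 (f : Fin 3 → ℝ → E3) (g : E3 → ℝ) : E4 → ℝ :=
  wedge22 g (fun x => unitv (f 1 (x 1) - f 0 (x 0))) (fun x => unitv (f 1 (x 2) - f 2 (x 3)))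

/-- The integrand of `I_{𝒳₃}(f)` for a 3-component long link. -/
def omegaL3 (f : Fin 3 → ℝ → E3) (g : E3 → ℝ) : E4 → ℝ :=
  wedge22 g (fun x => unitv (f 2 (x 2) - f 0 (x 0))) (fun x => unitv (f 1 (x 1) - f 2 (x 3)))

/-- The configuration space integral `I_{𝒳₁}(f)`. -/
def IL1 (f : Fin 3 → ℝ → E3) (g : E3 → ℝ) : ℝ := ∫ x in CL1, omegaL1 f g x

/-- The configuration space integral `I_{𝒳₂}(f)`. -/
def IL2 (f : Fin 3 → ℝ → E3) (g : E3 → ℝ) : ℝ := ∫ x in CL2, omegaL2 f g x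

/-- The configuration space integral `I_{𝒳₃}(f)`. -/
def IL3 (f : Fin 3 → ℝ → E3) (g : E3 → ℝ) : ℝ := ∫ x in CL3, omegaL3 f g x

/-- The configuration space `C_𝒴(f)` for a 3-component long link. -/
def CYL (f : Fin 3 → ℝ → E3) : Set E6 :=
  {x | ptY x ≠ f 0 (x 0) ∧ ptY x ≠ f 1 (x 1) ∧ ptY x ≠ f 2 (x 2)}

/-- The integrand `ω_𝒴 = h₁₄*η ∧ h₄₂*η ∧ h₃₄*η` for a 3-component long link. -/
def omegaYL (f : Fin 3 → ℝ → E3) (g : E3 → ℝ) : E6 → ℝ :=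
  wedge222 g (fun x => unitv (ptY x - f 0 (x 0))) (fun x => unitv (f 1 (x 1) - ptY x))
    (fun x => unitv (ptY x - f 2 (x 2)))

/-- The configuration space integral `I_𝒴(f)`. -/
def ILY (f : Fin 3 → ℝ → E3) (g : E3 → ℝ) : ℝ := ∫ x in CYL f, omegaYL f g x

/-! ### Model triple points -/

/-- The affine parametrization `t ↦ a + t • v` of a straight segment. -/
def seg (a v : E3) (t : ℝ) : E3 := a + t • v

/-- A model triple point: three straight segments `S₁, S₂, S₃` (indexed by `0, 1, 2`),
`S_k` parametrized by `seg (a k) (v k) : (-δ, δ) → ℝ³`, all parallel to the plane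
`N^⊥`, whose projections to `N^⊥` meet pairwise transversely at the single common point
which is the projection of each midpoint `a k`, and with `S₂` higher than `S₁`, `S₃`. -/
def IsModelTriple (a v : Fin 3 → E3) : Prop :=
  (∀ k, v k 2 = 0) ∧ (∀ k, v k ≠ 0) ∧
  pr12 (a 0) = pr12 (a 1) ∧ pr12 (a 1) = pr12 (a 2) ∧
  (∀ j k, j ≠ k → cross2 (v j) (v k) ≠ 0) ∧
  a 0 2 < a 1 2 ∧ a 2 2 < a 1 2

/-- A model triple point of type `(←, s₁, s₂, s₃)`: `S₁` passes over `S₃`, and the signs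
of the crossings `S₁–S₃`, `S₁–S₂`, `S₂–S₃` are `s₁, s₂, s₃` respectively. -/
def ModelLeft (a v : Fin 3 → E3) (s1 s2 s3 : ℝ) : Prop :=
  IsModelTriple a v ∧ a 2 2 < a 0 2 ∧
  s1 = Real.sign (cross2 (v 0) (v 2)) ∧
  s2 = Real.sign (cross2 (v 1) (v 0)) ∧
  s3 = Real.sign (cross2 (v 1) (v 2))

/-- A model triple point of type `(→, s₁, s₂, s₃)`: `S₃` passes over `S₁`, and the signs
of the crossings `S₁–S₃`, `S₁–S₂`, `S₂–S₃` are `s₁, s₂, s₃` respectively. -/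
def ModelRight (a v : Fin 3 → E3) (s1 s2 s3 : ℝ) : Prop :=
  IsModelTriple a v ∧ a 0 2 < a 2 2 ∧
  s1 = Real.sign (cross2 (v 2) (v 0)) ∧
  s2 = Real.sign (cross2 (v 1) (v 0)) ∧
  s3 = Real.sign (cross2 (v 1) (v 2))

/-- The cube `(-δ, δ)⁴ ⊆ ℝ⁴`. -/
def cube4 (δ : ℝ) : Set E4 := {x | ∀ i, |x i| < δ}

/-- The model configuration space integral `I_X^{X′₁}`: the two points `t₁ < t₂` lie on
`S₁`, the point `t₃` on `S₂` and the point `t₄` on `S₃`; the maps are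
`h₁₃ = unit (f₂(t₃) - f₁(t₁))` and `h₄₂ = unit (f₁(t₂) - f₃(t₄))`. -/
def IX1model (a v : Fin 3 → E3) (δ : ℝ) (g : E3 → ℝ) : ℝ :=
  ∫ x in cube4 δ ∩ {x : E4 | x 0 < x 1},
    wedge22 g (fun x => unitv (seg (a 1) (v 1) (x 2) - seg (a 0) (v 0) (x 0)))
      (fun x => unitv (seg (a 0) (v 0) (x 1) - seg (a 2) (v 2) (x 3))) x

/-- The model configuration space integral `I_X^{X′₂}` (`(X′₂, l)` for a model of type
`←`, `(X′₂, r)` for a model of type `→`): the two points `t₂ < t₃` lie on `S₂`, the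
point `t₁` on `S₁` and the point `t₄` on `S₃`; the maps are
`h₁₃ = unit (f₂(t₃) - f₁(t₁))` and `h₄₂ = unit (f₂(t₂) - f₃(t₄))`. -/
def IX2model (a v : Fin 3 → E3) (δ : ℝ) (g : E3 → ℝ) : ℝ :=
  ∫ x in cube4 δ ∩ {x : E4 | x 1 < x 2},
    wedge22 g (fun x => unitv (seg (a 1) (v 1) (x 2) - seg (a 0) (v 0) (x 0)))
      (fun x => unitv (seg (a 1) (v 1) (x 1) - seg (a 2) (v 2) (x 3))) x

/-- The model configuration space integral `I_X^{X′₃}`: the two points `t₃ < t₄` lie on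
`S₃`, the point `t₁` on `S₁` and the point `t₂` on `S₂`; the maps are
`h₁₃ = unit (f₃(t₃) - f₁(t₁))` and `h₄₂ = unit (f₂(t₂) - f₃(t₄))`. -/
def IX3model (a v : Fin 3 → E3) (δ : ℝ) (g : E3 → ℝ) : ℝ :=
  ∫ x in cube4 δ ∩ {x : E4 | x 2 < x 3},
    wedge22 g (fun x => unitv (seg (a 2) (v 2) (x 2) - seg (a 0) (v 0) (x 0)))
      (fun x => unitv (seg (a 1) (v 1) (x 1) - seg (a 2) (v 2) (x 3))) x

/-- The model `Y`-integral `I_Y^{s₁,s₂,s₃}` over `(-δ,δ)³ × ℝ³`: the point `t_k` lies on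
`S_k` and `x₄ ∈ ℝ³` is free; the maps are `h₁₄ = unit (x₄ - f₁(t₁))`,
`h₄₂ = unit (f₂(t₂) - x₄)` and `h₃₄ = unit (x₄ - f₃(t₃))`. -/
def IYmodel (a v : Fin 3 → E3) (δ : ℝ) (g : E3 → ℝ) : ℝ :=
  ∫ x in {x : E6 | |x 0| < δ ∧ |x 1| < δ ∧ |x 2| < δ ∧
      ptY x ≠ seg (a 0) (v 0) (x 0) ∧ ptY x ≠ seg (a 1) (v 1) (x 1) ∧
      ptY x ≠ seg (a 2) (v 2) (x 2)},
    wedge222 g (fun x => unitv (ptY x - seg (a 0) (v 0) (x 0)))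
      (fun x => unitv (seg (a 1) (v 1) (x 1) - ptY x))
      (fun x => unitv (ptY x - seg (a 2) (v 2) (x 2))) x

/-- Near every (triple or higher) multiple point of the diagram, the strands of the long
knot `f` are straight segments parallel to the plane `N^⊥`. -/
def StraightNearMultipleK (f : ℝ → E3) : Prop :=
  ∀ t u v : ℝ, t ≠ u → u ≠ v → t ≠ v →
    pr12 (f t) = pr12 (f u) → pr12 (f u) = pr12 (f v) →
    ∃ δ > (0 : ℝ), ∃ w : E3, w 2 = 0 ∧ ∀ s : ℝ, |s - t| < δ → f s = f t + (s - t) • w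

/-- Near every (triple or higher) multiple point of the diagram, the strands of the long
link `f` are straight segments parallel to the plane `N^⊥`. -/
def StraightNearMultipleL (f : Fin 3 → ℝ → E3) : Prop :=
  ∀ (i j k : Fin 3) (t u v : ℝ), (i, t) ≠ (j, u) → (j, u) ≠ (k, v) → (i, t) ≠ (k, v) →
    pr12 (f i t) = pr12 (f j u) → pr12 (f j u) = pr12 (f k v) →
    ∃ δ > (0 : ℝ), ∃ w : E3, w 2 = 0 ∧ ∀ s : ℝ, |s - t| < δ → f i s = f i t + (s - t) • w

/-! ### Closed 2-component links and the linking number -/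

/-- A smooth loop in `ℝ³`, parametrized with period 1 and injective on a period. -/
def IsLoop (f : ℝ → E3) : Prop :=
  ContDiff ℝ (⊤ : ℕ∞) f ∧ (∀ t, f (t + 1) = f t) ∧ (∀ t, deriv f t ≠ 0) ∧
    ∀ s t : ℝ, f s = f t → ∃ n : ℤ, t - s = n

/-- The diagram of the 2-component link `(f 0, f 1)` has only transverse double points. -/
def OnlyDouble2 (f : Fin 2 → ℝ → E3) : Prop :=
  (∀ i j s t, f i s ≠ f j t → pr12 (f i s) = pr12 (f j t) →
      cross2 (deriv (f i) s) (deriv (f j) t) ≠ 0) ∧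
  ∀ i j k s t u, f i s ≠ f j t → f j t ≠ f k u → f i s ≠ f k u →
    pr12 (f i s) = pr12 (f j t) → pr12 (f j t) = pr12 (f k u) → False

/-- The crossings of the diagram at which `f₂` passes over `f₁` (one parameter period). -/
def Crossing12 (f₁ f₂ : ℝ → E3) : Set (ℝ × ℝ) :=
  {p | p.1 ∈ Ico (0 : ℝ) 1 ∧ p.2 ∈ Ico (0 : ℝ) 1 ∧
    pr12 (f₁ p.1) = pr12 (f₂ p.2) ∧ pr3 (f₁ p.1) < pr3 (f₂ p.2)}

/-- The sum of the signs of the crossings of the diagram at which `f₂` passes over `f₁`;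
this is the linking number `lk(f₁, f₂)`, i.e. the mapping degree of
`h : S¹ × S¹ → S²`. -/
def lkSum (f₁ f₂ : ℝ → E3) : ℝ :=
  ∑ᶠ p ∈ Crossing12 f₁ f₂, Real.sign (cross2 (deriv f₂ p.2) (deriv f₁ p.1))

/-- The fundamental domain `[0,1) × [0,1)` of `S¹ × S¹`. -/
def sq01 : Set E2 := {x | x 0 ∈ Ico (0 : ℝ) 1 ∧ x 1 ∈ Ico (0 : ℝ) 1}

/-- `∫_{S¹×S¹} h*η` for `h(x₁,x₂) = unit (f₂(x₂) - f₁(x₁))`. -/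
def lkIntegral (f₁ f₂ : ℝ → E3) (g : E3 → ℝ) : ℝ :=
  ∫ x in sq01, form2 g (fun x : E2 => unitv (f₂ (x 1) - f₁ (x 0))) x 0 1

lemma mk3_0 (x y z : ℝ) : mk3 x y z 0 = x := rfl
lemma mk3_1 (x y z : ℝ) : mk3 x y z 1 = y := rfl
lemma mk3_2 (x y z : ℝ) : mk3 x y z 2 = z := rfl

lemma coord_le (v : E3) (i : Fin 3) : |v i| ≤ ‖v‖ := by
  simpa using PiLp.norm_apply_le v i

lemma norm_mk3_le (x y z : ℝ) : ‖mk3 x y z‖ ≤ |x| + |y| + |z| := by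
  rw [EuclideanSpace.norm_eq]
  apply Real.sqrt_le_iff.2
  refine ⟨by positivity, ?_⟩
  simp only [Fin.sum_univ_three, mk3_0, mk3_1, mk3_2, Real.norm_eq_abs]
  nlinarith [abs_nonneg x, abs_nonneg y, abs_nonneg z, mul_nonneg (abs_nonneg x) (abs_nonneg y),
    mul_nonneg (abs_nonneg x) (abs_nonneg z), mul_nonneg (abs_nonneg y) (abs_nonneg z)]

lemma norm_mk3_x (x : ℝ) : ‖mk3 x 0 0‖ = |x| := by
  rw [EuclideanSpace.norm_eq]
  simp [Fin.sum_univ_three, mk3_0, mk3_1, mk3_2, Real.sqrt_sq_eq_abs]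

/-- cross product in `E3`. -/
def cr (a b : E3) : E3 :=
  mk3 (a 1 * b 2 - a 2 * b 1) (a 2 * b 0 - a 0 * b 2) (a 0 * b 1 - a 1 * b 0)

lemma abs_prod_sub_le (a b : E3) (i j k l : Fin 3) :
    |a i * b j - a k * b l| ≤ 2 * ‖a‖ * ‖b‖ := by
  have h1 : |a i * b j| ≤ ‖a‖ * ‖b‖ := by
    rw [abs_mul]; exact mul_le_mul (coord_le a i) (coord_le b j) (abs_nonneg _) (norm_nonneg _)
  have h2 : |a k * b l| ≤ ‖a‖ * ‖b‖ := by
    rw [abs_mul]; exact mul_le_mul (coord_le a k) (coord_le b l) (abs_nonneg _) (norm_nonneg _)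
  calc _ ≤ |a i * b j| + |a k * b l| := abs_sub _ _
    _ ≤ _ := by linarith

lemma norm_cr_le (a b : E3) : ‖cr a b‖ ≤ 6 * ‖a‖ * ‖b‖ := by
  refine (norm_mk3_le _ _ _).trans ?_
  linarith [abs_prod_sub_le a b 1 2 2 1, abs_prod_sub_le a b 2 0 0 2, abs_prod_sub_le a b 0 1 1 0]

lemma det3_le (a b c : E3) : |det3 a b c| ≤ 6 * ‖a‖ * ‖b‖ * ‖c‖ := by
  have h : ∀ i : Fin 3, ∀ y : ℝ, |y| ≤ 2 * ‖b‖ * ‖c‖ → |a i * y| ≤ ‖a‖ * (2 * ‖b‖ * ‖c‖) := by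
    intro i y hy
    rw [abs_mul]; exact mul_le_mul (coord_le a i) hy (abs_nonneg _) (norm_nonneg _)
  have h0 := h 0 _ (abs_prod_sub_le b c 1 2 2 1)
  have h1 := h 1 _ (abs_prod_sub_le b c 0 2 2 0)
  have h2 := h 2 _ (abs_prod_sub_le b c 0 1 1 0)
  unfold det3
  rw [abs_le] at *
  constructor <;> linarith [h0.1, h1.1, h2.1, h0.2, h1.2, h2.2]

/-- Uniform estimates on a long knot. -/
structure KC (f : ℝ → E3) (L c : ℝ) : Prop where
  L1 : 1 ≤ L
  c0 : 0 < c
  d1 : ∀ t, ‖deriv f t‖ ≤ L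
  d2 : ∀ s t, ‖deriv f t - deriv f s‖ ≤ L * |t - s|
  tay : ∀ s t, ‖f t - f s - (t - s) • deriv f s‖ ≤ L * |t - s| * |t - s|
  lip : ∀ s t, ‖f t - f s‖ ≤ L * |t - s|
  low : ∀ s t, c * |t - s| ≤ ‖f t - f s‖
  str : ∀ t, 1 < |t| → deriv f t = mk3 1 0 0
  strf : ∀ t, 1 < |t| → f t = mk3 t 0 0

lemma deriv_str {f : ℝ → E3} (hf : IsLongKnot f) (t : ℝ) (ht : 1 < |t|) :
    deriv f t = mk3 1 0 0 := by
  have hev : f =ᶠ[𝓝 t] fun x => x • mk3 1 0 0 := by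
    have : ∀ᶠ x in 𝓝 t, 1 < |x| := continuous_abs.continuousAt.eventually (lt_mem_nhds ht)
    filter_upwards [this] with x hx
    rw [hf.2.2.2 x hx.le]
    ext i; fin_cases i <;> simp [mk3]
  rw [hev.deriv_eq]
  have : HasDerivAt (fun x : ℝ => x • mk3 1 0 0) ((1:ℝ) • mk3 1 0 0) t :=
    (hasDerivAt_id t).smul_const _
  rw [this.deriv, one_smul]

lemma low_compact {f : ℝ → E3} (hf : IsLongKnot f) (K : Set (ℝ × ℝ)) (hK : IsCompact K) :
    ∃ c > 0, ∀ p ∈ K, c * |p.2 - p.1| ≤ ‖f p.2 - f p.1‖ := by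
  have hc : Continuous f := hf.1.continuous
  refine hK.induction_on (p := fun S => ∃ c > 0, ∀ p ∈ S, c * |p.2 - p.1| ≤ ‖f p.2 - f p.1‖)
    ⟨1, one_pos, by simp⟩ ?_ ?_ ?_
  · rintro s t hst ⟨c, hc, h⟩; exact ⟨c, hc, fun p hp => h p (hst hp)⟩
  · rintro s t ⟨c, hc, h⟩ ⟨c', hc', h'⟩
    refine ⟨min c c', lt_min hc hc', ?_⟩
    rintro p (hp | hp)
    · exact (mul_le_mul_of_nonneg_right (min_le_left _ _) (abs_nonneg _)).trans (h p hp)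
    · exact (mul_le_mul_of_nonneg_right (min_le_right _ _) (abs_nonneg _)).trans (h' p hp)
  · rintro ⟨s, t⟩ -
    by_cases hst : s = t
    · subst hst
      have hsd : HasStrictDerivAt f (deriv f s) s :=
        (hf.1.contDiffAt).hasStrictDerivAt (by simp)
      have hpos : 0 < ‖deriv f s‖ / 2 := by
        have := norm_pos_iff.2 (hf.2.2.1 s); positivity
      have := hsd.hasStrictFDerivAt.isLittleO.bound hpos
      refine ⟨_, mem_nhdsWithin_of_mem_nhds this, ‖deriv f s‖ / 2, hpos, ?_⟩
      rintro ⟨a, b⟩ hp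
      simp at hp
      have h2 : ‖(a - b) • deriv f s‖ ≤ ‖f a - f b‖ + ‖f a - f b - (a - b) • deriv f s‖ := by
        have := norm_sub_le (f a - f b) (f a - f b - (a - b) • deriv f s)
        simpa using this
      rw [norm_smul, Real.norm_eq_abs] at h2
      simp only
      rw [norm_sub_rev, abs_sub_comm]
      linarith
    · have hpos : 0 < ‖f t - f s‖ := norm_pos_iff.2 (sub_ne_zero.2 (fun h => hst (hf.2.1 h).symm))
      have hpos2 : 0 < |t - s| := abs_pos.2 (sub_ne_zero.2 (Ne.symm hst))
      have hlt : ‖f t - f s‖ / (2 * |t - s|) * |t - s| < ‖f t - f s‖ := by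
        rw [div_mul_eq_mul_div, div_lt_iff₀ (by positivity)]; nlinarith
      have c1 : Continuous fun p : ℝ × ℝ => ‖f t - f s‖ / (2 * |t - s|) * |p.2 - p.1| := by fun_prop
      have c2 : Continuous fun p : ℝ × ℝ => ‖f p.2 - f p.1‖ := by fun_prop
      have := (isOpen_lt c1 c2).mem_nhds (x := (s, t)) hlt
      exact ⟨_, mem_nhdsWithin_of_mem_nhds this, ‖f t - f s‖ / (2 * |t - s|), by positivity,
        fun p hp => le_of_lt hp⟩

lemma exists_KC {f : ℝ → E3} (hf : IsLongKnot f) : ∃ L c, KC f L c := by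
  have hd : Differentiable ℝ f := hf.1.differentiable (by simp)
  have hcd : Continuous (deriv f) := hf.1.continuous_deriv (by simp)
  have hcd1 : ContDiff ℝ 1 (deriv f) :=
    (contDiff_succ_iff_deriv (n := 1) (f := f)).1 (hf.1.of_le (by
      have : ((1 + 1 : ℕ∞) : WithTop ℕ∞) ≤ ((⊤ : ℕ∞) : WithTop ℕ∞) := WithTop.coe_le_coe.2 le_top
      simpa using this)) |>.2.2
  have hdd : Differentiable ℝ (deriv f) := hcd1.differentiable (by simp)
  have hcdd : Continuous (deriv (deriv f)) := hcd1.continuous_deriv (by simp)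
  obtain ⟨A, hA⟩ := (isCompact_Icc (a := (-1:ℝ)) (b := 1)).exists_bound_of_continuousOn hcd.continuousOn
  obtain ⟨B, hB⟩ := (isCompact_Icc (a := (-1:ℝ)) (b := 1)).exists_bound_of_continuousOn hcdd.continuousOn
  obtain ⟨M, hM⟩ := (isCompact_Icc (a := (-1:ℝ)) (b := 1)).exists_bound_of_continuousOn hf.1.continuous.continuousOn
  have hst := deriv_str hf
  have hst2 : ∀ t, 1 < |t| → deriv (deriv f) t = 0 := by
    intro t ht
    have : deriv f =ᶠ[𝓝 t] fun _ => mk3 1 0 0 := by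
      have : ∀ᶠ x in 𝓝 t, 1 < |x| := continuous_abs.continuousAt.eventually (lt_mem_nhds ht)
      filter_upwards [this] with x hx using hst x hx
    rw [this.deriv_eq]; simp
  set L := max 1 (max A B) with hL
  have hL1 : 1 ≤ L := le_max_left _ _
  have hAL : A ≤ L := (le_max_left _ _).trans (le_max_right _ _)
  have hBL : B ≤ L := (le_max_right _ _).trans (le_max_right _ _)
  have d1 : ∀ t, ‖deriv f t‖ ≤ L := by
    intro t
    by_cases h : 1 < |t|
    · rw [hst t h, norm_mk3_x]; simpa using hL1
    · exact (hA t (abs_le.1 (not_lt.1 h))).trans hAL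
  have d2' : ∀ t, ‖deriv (deriv f) t‖ ≤ L := by
    intro t
    by_cases h : 1 < |t|
    · rw [hst2 t h]; simp; linarith
    · exact (hB t (abs_le.1 (not_lt.1 h))).trans hBL
  have d2 : ∀ s t, ‖deriv f t - deriv f s‖ ≤ L * |t - s| := fun s t =>
    convex_univ.norm_image_sub_le_of_norm_deriv_le (fun x _ => hdd x) (fun x _ => d2' x)
      (mem_univ _) (mem_univ _)
  have lip : ∀ s t, ‖f t - f s‖ ≤ L * |t - s| := fun s t =>
    convex_univ.norm_image_sub_le_of_norm_deriv_le (fun x _ => hd x) (fun x _ => d1 x)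
      (mem_univ _) (mem_univ _)
  have tay : ∀ s t, ‖f t - f s - (t - s) • deriv f s‖ ≤ L * |t - s| * |t - s| := by
    intro s t
    have key := (convex_uIcc s t).norm_image_sub_le_of_norm_hasDerivWithin_le
      (f := fun u => f u - u • deriv f s) (f' := fun u => deriv f u - (1:ℝ) • deriv f s)
      (x := s) (y := t) (C := L * |t - s|)
      (fun x _ => ((hd x).hasDerivAt.sub ((hasDerivAt_id x).smul_const _)).hasDerivWithinAt)
      (fun x hx => by
        rw [one_smul]
        refine (d2 s x).trans ?_
        exact mul_le_mul_of_nonneg_left (abs_sub_left_of_mem_uIcc hx) (by linarith)) left_mem_uIcc right_mem_uIcc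
    have e : f t - t • deriv f s - (f s - s • deriv f s) = f t - f s - (t - s) • deriv f s := by
      rw [sub_smul]; abel
    rw [← e]; simpa using key
  set R := 2 * |M| + 2 with hR
  obtain ⟨c, hc, hlow⟩ := low_compact hf (Icc (-R) R ×ˢ Icc (-R) R) (isCompact_Icc.prod isCompact_Icc)
  have aux : ∀ s t, R < |t| → (1/2) * |t - s| ≤ ‖f t - f s‖ := by
    intro s t ht
    have hM0 := abs_nonneg M
    have ht1 : 1 ≤ |t| := by linarith
    by_cases h : 1 ≤ |s|
    · rw [hf.2.2.2 t ht1, hf.2.2.2 s h]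
      have : mk3 t 0 0 - mk3 s 0 0 = mk3 (t - s) 0 0 := by
        ext i; fin_cases i <;> simp [mk3]
      rw [this, norm_mk3_x]; linarith [abs_nonneg (t - s)]
    · have h1 := hM s (abs_le.1 (not_le.1 h).le)
      have h2 : ‖f t‖ = |t| := by rw [hf.2.2.2 t ht1, norm_mk3_x]
      have h3 := norm_sub_norm_le (f t) (f s)
      have h4 := abs_sub t s
      have h5 := le_abs_self M
      linarith
  refine ⟨L, min c (1/2), hL1, lt_min hc (by norm_num), d1, d2, tay, lip, ?_, hst,
    fun t ht => hf.2.2.2 t ht.le⟩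
  intro s t
  by_cases ht : R < |t|
  · exact (mul_le_mul_of_nonneg_right (min_le_right _ _) (abs_nonneg _)).trans (aux s t ht)
  by_cases hs : R < |s|
  · rw [norm_sub_rev, abs_sub_comm]
    exact (mul_le_mul_of_nonneg_right (min_le_right _ _) (abs_nonneg _)).trans (aux t s hs)
  · exact (mul_le_mul_of_nonneg_right (min_le_left _ _) (abs_nonneg _)).trans
      (hlow (s, t) ⟨abs_le.1 (not_lt.1 hs), abs_le.1 (not_lt.1 ht)⟩)

lemma form2_unitv {n : ℕ} (g : E3 → ℝ) (V : EuclideanSpace ℝ (Fin n) → E3)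
    (x : EuclideanSpace ℝ (Fin n)) (hV : DifferentiableAt ℝ V x) (h0 : V x ≠ 0) (i j : Fin n) :
    form2 g (fun y => unitv (V y)) x i j =
      g (unitv (V x)) * (‖V x‖⁻¹ ^ 3) * det3 (V x) (pdv V i x) (pdv V j x) := by
  have hφ : DifferentiableAt ℝ (fun y => ‖V y‖⁻¹) x :=
    (hV.norm ℝ h0).inv (norm_ne_zero_iff.2 h0)
  have hp : ∀ i, pdv (fun y => unitv (V y)) i x = ‖V x‖⁻¹ • pdv V i x +
      (fderiv ℝ (fun y => ‖V y‖⁻¹) x (EuclideanSpace.single i 1)) • V x := by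
    intro i
    have : HasFDerivAt (fun y => unitv (V y)) _ x := hφ.hasFDerivAt.smul hV.hasFDerivAt
    simp [pdv, this.fderiv]
  unfold form2
  rw [hp i, hp j]
  simp only [det3, unitv, PiLp.add_apply, PiLp.smul_apply, smul_eq_mul]
  ring

lemma pdv_comp {n : ℕ} {f : ℝ → E3} (hd : Differentiable ℝ f) (k : Fin n)
    (x : EuclideanSpace ℝ (Fin n)) :
    HasFDerivAt (fun y : EuclideanSpace ℝ (Fin n) => f (y k))
      ((EuclideanSpace.proj k : EuclideanSpace ℝ (Fin n) →L[ℝ] ℝ).smulRight (deriv f (x k))) x := by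
  have h1 : HasFDerivAt (fun y : EuclideanSpace ℝ (Fin n) => y k)
      (EuclideanSpace.proj k : EuclideanSpace ℝ (Fin n) →L[ℝ] ℝ) x :=
    (EuclideanSpace.proj k : EuclideanSpace ℝ (Fin n) →L[ℝ] ℝ).hasFDerivAt
  have h2 := (hd (x k)).hasDerivAt.hasFDerivAt.comp x h1
  have e : (EuclideanSpace.proj k : EuclideanSpace ℝ (Fin n) →L[ℝ] ℝ).smulRight (deriv f (x k)) =
    (ContinuousLinearMap.toSpanSingleton ℝ (deriv f (x k))).comp
      (EuclideanSpace.proj k : EuclideanSpace ℝ (Fin n) →L[ℝ] ℝ) := by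
    ext y; simp
  rw [e]; exact h2

lemma differentiable_mk3 {E : Type*} [NormedAddCommGroup E] [NormedSpace ℝ E] {a b c : E → ℝ}
    (ha : Differentiable ℝ a) (hb : Differentiable ℝ b) (hc : Differentiable ℝ c) :
    Differentiable ℝ (fun x => mk3 (a x) (b x) (c x)) := by
  rw [differentiable_euclidean]
  intro i; fin_cases i
  · exact ha
  · exact hb
  · exact hc

def ptYL : E6 →L[ℝ] E3 := LinearMap.toContinuousLinearMap
  { toFun := ptY
    map_add' := by intro x y; ext i; fin_cases i <;> simp [ptY, mk3]
    map_smul' := by intro x y; ext i; fin_cases i <;> simp [ptY, mk3] }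

lemma ptYL_apply (x : E6) : ptYL x = ptY x := rfl

lemma pdvX {f : ℝ → E3} (hd : Differentiable ℝ f) (a b : Fin 4) (x : E4) (i : Fin 4) :
    pdv (fun y : E4 => f (y b) - f (y a)) i x =
      (if b = i then deriv f (x b) else 0) - (if a = i then deriv f (x a) else 0) := by
  have := (pdv_comp hd b x).sub (pdv_comp hd a x)
  unfold pdv
  erw [this.fderiv]
  simp

lemma pdvY {f : ℝ → E3} (hd : Differentiable ℝ f) (a : Fin 6) (x : E6) (i : Fin 6) :
    pdv (fun y : E6 => ptY y - f (y a)) i x =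
      ptY (EuclideanSpace.single i 1) - (if a = i then deriv f (x a) else 0) := by
  have := (ptYL.hasFDerivAt (x := x)).sub (pdv_comp hd a x)
  unfold pdv
  erw [this.fderiv]
  simp [ptYL_apply]

lemma pdvY' {f : ℝ → E3} (hd : Differentiable ℝ f) (a : Fin 6) (x : E6) (i : Fin 6) :
    pdv (fun y : E6 => f (y a) - ptY y) i x =
      - (ptY (EuclideanSpace.single i 1) - (if a = i then deriv f (x a) else 0)) := by
  have := (pdv_comp hd a x).sub (ptYL.hasFDerivAt (x := x))
  unfold pdv
  erw [this.fderiv]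
  simp [ptYL_apply]

/-- pulled back form of the chord between two points of the knot -/
def FX (f : ℝ → E3) (s t : ℝ) : ℝ := ‖f t - f s‖⁻¹ ^ 3 * |det3 (f t - f s) (deriv f s) (deriv f t)|

lemma form2X {f : ℝ → E3} (hf : IsLongKnot f) {g : E3 → ℝ} {G : ℝ}
    (hG : ∀ v : E3, ‖v‖ = 1 → |g v| ≤ G) (hG0 : 0 ≤ G) (x : E4) (a b : Fin 4)
    (hab : x a ≠ x b) (i j : Fin 4) :
    |form2 g (fun y => unitv (f (y b) - f (y a))) x i j| ≤
      if (i = a ∧ j = b) ∨ (i = b ∧ j = a) then G * FX f (x a) (x b) else 0 := by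
  have hd : Differentiable ℝ f := hf.1.differentiable (by simp)
  have h0 : f (x b) - f (x a) ≠ 0 := sub_ne_zero.2 fun h => hab (hf.2.1 h).symm
  have hne : a ≠ b := fun h => hab (by rw [h])
  rw [form2_unitv g (fun y : E4 => f (y b) - f (y a)) x
    ((pdv_comp hd b x).sub (pdv_comp hd a x)).differentiableAt h0]
  rw [pdvX hd, pdvX hd]
  have hu : |g (unitv (f (x b) - f (x a)))| ≤ G := hG _ (by
    rw [unitv, norm_smul, norm_inv, norm_norm, inv_mul_cancel₀ (norm_ne_zero_iff.2 h0)])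
  have hfx : ∀ D, |D| = |det3 (f (x b) - f (x a)) (deriv f (x a)) (deriv f (x b))| →
      |g (unitv (f (x b) - f (x a))) * ‖f (x b) - f (x a)‖⁻¹ ^ 3 * D| ≤ G * FX f (x a) (x b) := by
    intro D hD
    rw [abs_mul, abs_mul, hD, FX, ← mul_assoc, abs_of_nonneg (a := ‖f (x b) - f (x a)‖⁻¹ ^ 3) (by positivity)]
    gcongr
  by_cases h1 : i = a ∧ j = b
  · rw [if_pos (Or.inl h1)]
    apply hfx
    rw [h1.1, h1.2, if_neg hne.symm, if_pos rfl, if_pos rfl, if_neg hne, ← abs_neg]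
    congr 1
    simp [det3]; ring
  by_cases h2 : i = b ∧ j = a
  · rw [if_pos (Or.inr h2)]
    apply hfx
    rw [h2.1, h2.2, if_neg hne.symm, if_pos rfl, if_pos rfl, if_neg hne]
    congr 1
    simp [det3]; ring
  rw [if_neg (show ¬((i = a ∧ j = b) ∨ (i = b ∧ j = a)) by tauto)]
  have : det3 (f (x b) - f (x a)) ((if b = i then deriv f (x b) else 0) - if a = i then deriv f (x a) else 0)
    ((if b = j then deriv f (x b) else 0) - if a = j then deriv f (x a) else 0) = 0 := by
    split_ifs with k1 k2 k3 k4 k5 k6 k7 k8 <;> 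
      first
      | (exfalso; subst_vars; tauto)
      | (simp [det3] <;> ring)
  rw [this]; simp

lemma omegaX_le {f : ℝ → E3} (hf : IsLongKnot f) {g : E3 → ℝ} {G : ℝ}
    (hG : ∀ v : E3, ‖v‖ = 1 → |g v| ≤ G) (hG0 : 0 ≤ G) (x : E4) (hx : x ∈ CX) :
    |omegaX f g x| ≤ 6 * G ^ 2 * (FX f (x 0) (x 2) * FX f (x 1) (x 3)) := by
  obtain ⟨h1, h2, h3⟩ := hx
  have hF : ∀ s t, 0 ≤ FX f s t := fun s t => by unfold FX; positivity
  have hFs : FX f (x 3) (x 1) = FX f (x 1) (x 3) := by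
    unfold FX
    rw [norm_sub_rev]
    congr 1
    congr 1
    simp [det3]; ring
  unfold omegaX wedge22
  rw [abs_mul]
  have : |∑ σ : Equiv.Perm (Fin 4), ((Equiv.Perm.sign σ : ℤ) : ℝ) *
      form2 g (fun x => unitv (f (x 2) - f (x 0))) x (σ 0) (σ 1) *
      form2 g (fun x => unitv (f (x 1) - f (x 3))) x (σ 2) (σ 3)| ≤
      ∑ σ : Equiv.Perm (Fin 4), (G * FX f (x 0) (x 2)) * (G * FX f (x 1) (x 3)) := by
    refine (Finset.abs_sum_le_sum_abs _ _).trans (Finset.sum_le_sum fun σ _ => ?_)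
    have hs : |((Equiv.Perm.sign σ : ℤ) : ℝ)| = 1 := by
      rcases Int.units_eq_one_or (Equiv.Perm.sign σ) with h | h <;> simp [h]
    rw [abs_mul, abs_mul, hs, one_mul]
    have e1 := form2X hf hG hG0 x 0 2 (by linarith : x 0 < x 2).ne (σ 0) (σ 1)
    have e2 := form2X hf hG hG0 x 3 1 (by linarith : x 1 < x 3).ne' (σ 2) (σ 3)
    have n1 := mul_nonneg hG0 (hF (x 0) (x 2))
    have n2 := mul_nonneg hG0 (hF (x 1) (x 3))
    rw [hFs] at e2
    refine mul_le_mul (e1.trans ?_) (e2.trans ?_) (abs_nonneg _) n1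
    · split_ifs <;> simp [n1]
    · split_ifs <;> simp [n2]
  have hc : (Finset.univ : Finset (Equiv.Perm (Fin 4))).card = 24 := by
    rw [Finset.card_univ, Fintype.card_perm, Fintype.card_fin]; rfl
  rw [Finset.sum_const, hc] at this
  have : |(1/4 : ℝ)| * _ ≤ |(1/4:ℝ)| * _ := mul_le_mul_of_nonneg_left this (abs_nonneg _)
  refine this.trans (le_of_eq ?_)
  rw [abs_of_pos (by norm_num)]
  simp; ring

def detN (r : Fin 6 → Fin 6 → ℝ) : ℝ :=
  ∑ σ : Equiv.Perm (Fin 6), ((Equiv.Perm.sign σ : ℤ) : ℝ) *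
    (r 0 (σ 0) * r 1 (σ 1) * r 2 (σ 2) * r 3 (σ 3) * r 4 (σ 4) * r 5 (σ 5))

lemma detN_eq (r : Fin 6 → Fin 6 → ℝ) : detN r = Matrix.det (Matrix.of r) := by
  rw [← Matrix.det_transpose, Matrix.det_apply', detN]
  refine Finset.sum_congr rfl fun σ _ => ?_
  rw [Fin.prod_univ_six]
  rfl

/-- the standard determinant -/
lemma detN_std (a b c : Fin 3 → ℝ) :
    detN ![![1,0,0,0,0,0], ![0,0,0,a 0,a 1,a 2], ![0,1,0,0,0,0], ![0,0,0,b 0,b 1,b 2],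
      ![0,0,1,0,0,0], ![0,0,0,c 0,c 1,c 2]] =
    - (a 0 * (b 1 * c 2 - b 2 * c 1) - a 1 * (b 0 * c 2 - b 2 * c 0) +
      a 2 * (b 0 * c 1 - b 1 * c 0)) := by
  rw [detN_eq]
  simp [Matrix.det_succ_row_zero, Fin.sum_univ_succ, Fin.succAbove]
  ring

/-- antisymmetrised product of three bilinear forms -/
def SS (X Y Z : Fin 6 → Fin 6 → ℝ) : ℝ :=
  ∑ σ : Equiv.Perm (Fin 6), ((Equiv.Perm.sign σ : ℤ) : ℝ) *
    X (σ 0) (σ 1) * Y (σ 2) (σ 3) * Z (σ 4) (σ 5)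

lemma SS_flip_aux (F G : Equiv.Perm (Fin 6) → ℝ) (i j : Fin 6) (h : i ≠ j)
    (hFG : ∀ σ, F (σ * Equiv.swap i j) = G σ) :
    ∑ σ : Equiv.Perm (Fin 6), ((Equiv.Perm.sign σ : ℤ) : ℝ) * F σ =
      - ∑ σ : Equiv.Perm (Fin 6), ((Equiv.Perm.sign σ : ℤ) : ℝ) * G σ := by
  rw [← Equiv.sum_comp (Equiv.mulRight (Equiv.swap i j)), ← Finset.sum_neg_distrib]
  refine Finset.sum_congr rfl fun σ _ => ?_
  simp [Equiv.Perm.sign_mul, Equiv.Perm.sign_swap h, hFG]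

lemma SS_flip0 (X Y Z : Fin 6 → Fin 6 → ℝ) : SS (fun i j => X j i) Y Z = - SS X Y Z := by
  have := SS_flip_aux (fun σ => X (σ 1) (σ 0) * Y (σ 2) (σ 3) * Z (σ 4) (σ 5))
    (fun σ => X (σ 0) (σ 1) * Y (σ 2) (σ 3) * Z (σ 4) (σ 5)) 0 1 (by decide) (fun σ => by
      simp [Equiv.swap_apply_def])
  simpa only [SS, mul_assoc] using this

lemma SS_flip1 (X Y Z : Fin 6 → Fin 6 → ℝ) : SS X (fun i j => Y j i) Z = - SS X Y Z := by
  have := SS_flip_aux (fun σ => X (σ 0) (σ 1) * Y (σ 3) (σ 2) * Z (σ 4) (σ 5))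
    (fun σ => X (σ 0) (σ 1) * Y (σ 2) (σ 3) * Z (σ 4) (σ 5)) 2 3 (by decide) (fun σ => by
      simp [Equiv.swap_apply_def])
  simpa only [SS, mul_assoc] using this

lemma SS_flip2 (X Y Z : Fin 6 → Fin 6 → ℝ) : SS X Y (fun i j => Z j i) = - SS X Y Z := by
  have := SS_flip_aux (fun σ => X (σ 0) (σ 1) * Y (σ 2) (σ 3) * Z (σ 5) (σ 4))
    (fun σ => X (σ 0) (σ 1) * Y (σ 2) (σ 3) * Z (σ 4) (σ 5)) 4 5 (by decide) (fun σ => by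
      simp [Equiv.swap_apply_def])
  simpa only [SS, mul_assoc] using this

lemma SS_sub0 (X X' Y Z : Fin 6 → Fin 6 → ℝ) :
    SS (fun i j => X i j - X' i j) Y Z = SS X Y Z - SS X' Y Z := by
  unfold SS; rw [← Finset.sum_sub_distrib]; refine Finset.sum_congr rfl fun σ _ => by ring

lemma SS_sub1 (X Y Y' Z : Fin 6 → Fin 6 → ℝ) :
    SS X (fun i j => Y i j - Y' i j) Z = SS X Y Z - SS X Y' Z := by
  unfold SS; rw [← Finset.sum_sub_distrib]; refine Finset.sum_congr rfl fun σ _ => by ring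

lemma SS_sub2 (X Y Z Z' : Fin 6 → Fin 6 → ℝ) :
    SS X Y (fun i j => Z i j - Z' i j) = SS X Y Z - SS X Y Z' := by
  unfold SS; rw [← Finset.sum_sub_distrib]; refine Finset.sum_congr rfl fun σ _ => by ring

lemma SS_anti0 (X Y Z : Fin 6 → Fin 6 → ℝ) :
    SS (fun i j => X i j - X j i) Y Z = 2 * SS X Y Z := by
  have h1 := SS_sub0 X (fun i j => X j i) Y Z
  have h2 := SS_flip0 X Y Z
  linarith

lemma SS_anti1 (X Y Z : Fin 6 → Fin 6 → ℝ) :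
    SS X (fun i j => Y i j - Y j i) Z = 2 * SS X Y Z := by
  have h1 := SS_sub1 X Y (fun i j => Y j i) Z
  have h2 := SS_flip1 X Y Z
  linarith

lemma SS_anti2 (X Y Z : Fin 6 → Fin 6 → ℝ) :
    SS X Y (fun i j => Z i j - Z j i) = 2 * SS X Y Z := by
  have h1 := SS_sub2 X Y Z (fun i j => Z j i)
  have h2 := SS_flip2 X Y Z
  linarith

def dl (a i : Fin 6) : ℝ := if i = a then 1 else 0

lemma SS_reduce (X Y Z : Fin 6 → Fin 6 → ℝ)
    (aX : ∀ i j, X i j = - X j i) (aY : ∀ i j, Y i j = - Y j i) (aZ : ∀ i j, Z i j = - Z j i)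
    (X1 : ∀ i, X 1 i = 0) (X2 : ∀ i, X 2 i = 0) (Y0 : ∀ i, Y 0 i = 0) (Y2 : ∀ i, Y 2 i = 0)
    (Z0 : ∀ i, Z 0 i = 0) (Z1 : ∀ i, Z 1 i = 0) :
    SS X Y Z = SS (fun i j => dl 0 i * X 0 j - dl 0 j * X 0 i)
      (fun i j => dl 1 i * Y 1 j - dl 1 j * Y 1 i)
      (fun i j => dl 2 i * Z 2 j - dl 2 j * Z 2 i) := by
  have X1' : ∀ i, X i 1 = 0 := fun i => by rw [aX, X1, neg_zero]
  have X2' : ∀ i, X i 2 = 0 := fun i => by rw [aX, X2, neg_zero]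
  have Y0' : ∀ i, Y i 0 = 0 := fun i => by rw [aY, Y0, neg_zero]
  have Y2' : ∀ i, Y i 2 = 0 := fun i => by rw [aY, Y2, neg_zero]
  have Z0' : ∀ i, Z i 0 = 0 := fun i => by rw [aZ, Z0, neg_zero]
  have Z1' : ∀ i, Z i 1 = 0 := fun i => by rw [aZ, Z1, neg_zero]
  unfold SS
  refine Finset.sum_congr rfl fun σ _ => ?_
  have surj : ∀ a : Fin 6, a = σ 0 ∨ a = σ 1 ∨ a = σ 2 ∨ a = σ 3 ∨ a = σ 4 ∨ a = σ 5 := by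
    intro a
    obtain ⟨k, rfl⟩ := σ.surjective a
    fin_cases k <;> simp
  have n01 : σ 0 ≠ σ 1 := fun h => absurd (σ.injective h) (by decide)
  have n23 : σ 2 ≠ σ 3 := fun h => absurd (σ.injective h) (by decide)
  have n45 : σ 4 ≠ σ 5 := fun h => absurd (σ.injective h) (by decide)
  generalize hs : ((Equiv.Perm.sign σ : ℤ) : ℝ) = s
  by_cases h0 : 0 = σ 0 ∨ 0 = σ 1
  swap
  · have e1 : dl 0 (σ 0) = 0 := by unfold dl; rw [if_neg]; tauto
    have e2 : dl 0 (σ 1) = 0 := by unfold dl; rw [if_neg]; tauto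
    have : Y (σ 2) (σ 3) = 0 ∨ Z (σ 4) (σ 5) = 0 := by
      rcases surj 0 with h | h | h | h | h | h
      · tauto
      · tauto
      all_goals simp [← h, Y0, Y0', Z0, Z0']
    rcases this with h | h <;> simp [h, e1, e2]
  by_cases h1 : 1 = σ 2 ∨ 1 = σ 3
  swap
  · have e1 : dl 1 (σ 2) = 0 := by unfold dl; rw [if_neg]; tauto
    have e2 : dl 1 (σ 3) = 0 := by unfold dl; rw [if_neg]; tauto
    have : X (σ 0) (σ 1) = 0 ∨ Z (σ 4) (σ 5) = 0 := by
      rcases surj 1 with h | h | h | h | h | h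
      · simp [← h, X1, X1']
      · simp [← h, X1, X1']
      · tauto
      · tauto
      all_goals simp [← h, Z1, Z1']
    rcases this with h | h <;> simp [h, e1, e2]
  by_cases h2 : 2 = σ 4 ∨ 2 = σ 5
  swap
  · have e1 : dl 2 (σ 4) = 0 := by unfold dl; rw [if_neg]; tauto
    have e2 : dl 2 (σ 5) = 0 := by unfold dl; rw [if_neg]; tauto
    have : X (σ 0) (σ 1) = 0 ∨ Y (σ 2) (σ 3) = 0 := by
      rcases surj 2 with h | h | h | h | h | h
      · simp [← h, X2, X2']
      · simp [← h, X2, X2']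
      · simp [← h, Y2, Y2']
      · simp [← h, Y2, Y2']
      · tauto
      · tauto
    rcases this with h | h <;> simp [h, e1, e2]
  have key : ∀ (W : Fin 6 → Fin 6 → ℝ) (aW : ∀ i j, W i j = - W j i) (a i j : Fin 6), i ≠ j →
      (a = i ∨ a = j) → W i j = dl a i * W a j - dl a j * W a i := by
    intro W aW a i j hij h
    rcases h with rfl | rfl
    · simp [dl, hij.symm]
    · simp [dl, hij, ← aW]
  rw [key X aX 0 _ _ n01 h0, key Y aY 1 _ _ n23 h1, key Z aZ 2 _ _ n45 h2]

lemma SS_eq (X Y Z : Fin 6 → Fin 6 → ℝ)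
    (aX : ∀ i j, X i j = - X j i) (aY : ∀ i j, Y i j = - Y j i) (aZ : ∀ i j, Z i j = - Z j i)
    (X1 : ∀ i, X 1 i = 0) (X2 : ∀ i, X 2 i = 0) (Y0 : ∀ i, Y 0 i = 0) (Y2 : ∀ i, Y 2 i = 0)
    (Z0 : ∀ i, Z 0 i = 0) (Z1 : ∀ i, Z 1 i = 0) :
    SS X Y Z = - 8 * (X 0 3 * (Y 1 4 * Z 2 5 - Y 1 5 * Z 2 4) -
      X 0 4 * (Y 1 3 * Z 2 5 - Y 1 5 * Z 2 3) + X 0 5 * (Y 1 3 * Z 2 4 - Y 1 4 * Z 2 3)) := by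
  have diag : ∀ (W : Fin 6 → Fin 6 → ℝ) (aW : ∀ i j, W i j = - W j i) i, W i i = 0 :=
    fun W aW i => by linarith [aW i i]
  rw [SS_reduce X Y Z aX aY aZ X1 X2 Y0 Y2 Z0 Z1]
  set Q0 : Fin 6 → Fin 6 → ℝ := fun i j => dl 0 i * X 0 j with hQ0
  set Q1 : Fin 6 → Fin 6 → ℝ := fun i j => dl 1 i * Y 1 j with hQ1
  set Q2 : Fin 6 → Fin 6 → ℝ := fun i j => dl 2 i * Z 2 j with hQ2
  have e0 := SS_anti0 Q0 (fun i j => Q1 i j - Q1 j i) (fun i j => Q2 i j - Q2 j i)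
  have e1 := SS_anti1 Q0 Q1 (fun i j => Q2 i j - Q2 j i)
  have e2 := SS_anti2 Q0 Q1 Q2
  refine e0.trans ?_
  rw [e1, e2]
  have fin : SS Q0 Q1 Q2 = detN ![![1,0,0,0,0,0], ![0,0,0,X 0 3,X 0 4,X 0 5], ![0,1,0,0,0,0],
      ![0,0,0,Y 1 3, Y 1 4, Y 1 5], ![0,0,1,0,0,0], ![0,0,0,Z 2 3, Z 2 4, Z 2 5]] := by
    have d0 : dl 0 = ![1,0,0,0,0,0] := by ext i; fin_cases i <;> simp [dl]
    have d1 : dl 1 = ![0,1,0,0,0,0] := by ext i; fin_cases i <;> simp [dl]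
    have d2 : dl 2 = ![0,0,1,0,0,0] := by ext i; fin_cases i <;> simp [dl]
    have b0 : X 0 = ![0,0,0,X 0 3,X 0 4,X 0 5] := by
      ext i; fin_cases i
      · exact diag X aX 0
      · simpa [X1] using aX 0 1
      · simpa [X2] using aX 0 2
      all_goals rfl
    have b1 : Y 1 = ![0,0,0,Y 1 3,Y 1 4,Y 1 5] := by
      ext i; fin_cases i
      · simpa [Y0] using aY 1 0
      · exact diag Y aY 1
      · simpa [Y2] using aY 1 2
      all_goals rfl
    have b2 : Z 2 = ![0,0,0,Z 2 3,Z 2 4,Z 2 5] := by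
      ext i; fin_cases i
      · simpa [Z0] using aZ 2 0
      · simpa [Z1] using aZ 2 1
      · exact diag Z aZ 2
      all_goals rfl
    rw [← b0, ← b1, ← b2, ← d0, ← d1, ← d2]
    unfold SS detN
    refine Finset.sum_congr rfl fun σ _ => ?_
    simp only [hQ0, hQ1, hQ2]
    show _ = _ * (dl 0 (σ 0) * X 0 (σ 1) * dl 1 (σ 2) * Y 1 (σ 3) * dl 2 (σ 4) * Z 2 (σ 5))
    ring
  have st := detN_std ![X 0 3, X 0 4, X 0 5] ![Y 1 3, Y 1 4, Y 1 5] ![Z 2 3, Z 2 4, Z 2 5]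
  simp only [Matrix.cons_val] at st
  rw [fin, st]
  ring

lemma measurable_unitv : Measurable unitv := by
  unfold unitv; fun_prop

lemma measurable_form2 {n : ℕ} {g : E3 → ℝ} (hg : Continuous g) {h : EuclideanSpace ℝ (Fin n) → E3}
    (hh : Measurable h) (i j : Fin n) : Measurable fun x => form2 g h x i j := by
  have hc : ∀ k : Fin 3, Measurable fun v : E3 => v k := fun k =>
    (EuclideanSpace.proj k : E3 →L[ℝ] ℝ).continuous.measurable
  have hp : ∀ i, Measurable fun x => pdv h i x := fun i => measurable_fderiv_apply_const ℝ h _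
  have h1 : ∀ k, Measurable fun x => h x k := fun k => (hc k).comp hh
  have h2 : ∀ i k, Measurable fun x => pdv h i x k := fun i k => (hc k).comp (hp i)
  have h3 : Measurable fun x => g (h x) := hg.measurable.comp hh
  unfold form2 det3
  fun_prop

lemma continuous_coord {n : ℕ} (k : Fin n) : Continuous fun x : EuclideanSpace ℝ (Fin n) => x k :=
  (EuclideanSpace.proj k : EuclideanSpace ℝ (Fin n) →L[ℝ] ℝ).continuous

lemma continuous_ptY : Continuous ptY := ptYL.continuous

lemma measurable_omegaX {f : ℝ → E3} (hf : Continuous f) {g : E3 → ℝ} (hg : Continuous g) :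
    Measurable (omegaX f g) := by
  have h : ∀ a b : Fin 4, Measurable fun x : E4 => unitv (f (x a) - f (x b)) := fun a b =>
    measurable_unitv.comp (((hf.comp (continuous_coord a)).sub (hf.comp (continuous_coord b))).measurable)
  unfold omegaX wedge22
  refine Measurable.const_mul (Finset.measurable_sum _ fun σ _ => ?_) _
  exact ((measurable_form2 hg (h _ _) _ _).const_mul _).mul (measurable_form2 hg (h _ _) _ _)

lemma measurable_omegaY {f : ℝ → E3} (hf : Continuous f) {g : E3 → ℝ} (hg : Continuous g) :
    Measurable (omegaY f g) := by
  have h : ∀ a : Fin 6, Measurable fun x : E6 => unitv (ptY x - f (x a)) := fun a =>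
    measurable_unitv.comp ((continuous_ptY.sub (hf.comp (continuous_coord a))).measurable)
  have h' : ∀ a : Fin 6, Measurable fun x : E6 => unitv (f (x a) - ptY x) := fun a =>
    measurable_unitv.comp (((hf.comp (continuous_coord a)).sub continuous_ptY).measurable)
  unfold omegaY wedge222
  refine Measurable.const_mul (Finset.measurable_sum _ fun σ _ => ?_) _
  exact (((measurable_form2 hg (h _) _ _).const_mul _).mul (measurable_form2 hg (h' _) _ _)).mul
    (measurable_form2 hg (h _) _ _)

/-- the cross product of the edge vector and the tangent -/
def WY (f : ℝ → E3) (p : E3) (t : ℝ) : E3 := cr (p - f t) (deriv f t)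

lemma norm_unitv {v : E3} (h : v ≠ 0) : ‖unitv v‖ = 1 := by
  rw [unitv, norm_smul, norm_inv, norm_norm, inv_mul_cancel₀ (norm_ne_zero_iff.2 h)]

/-- the tangent data of one edge -/
def TT (f : ℝ → E3) (x : E6) (a i : Fin 6) : E3 :=
  ptY (EuclideanSpace.single i 1) - (if a = i then deriv f (x a) else 0)

lemma formY {f : ℝ → E3} (hf : IsLongKnot f) (g : E3 → ℝ) (x : E6) (a : Fin 6)
    (hx : ptY x ≠ f (x a)) (i j : Fin 6) :
    form2 g (fun y => unitv (ptY y - f (y a))) x i j =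
      (g (unitv (ptY x - f (x a))) * ‖ptY x - f (x a)‖⁻¹ ^ 3) *
        det3 (ptY x - f (x a)) (TT f x a i) (TT f x a j) := by
  have hd : Differentiable ℝ f := hf.1.differentiable (by simp)
  rw [form2_unitv g (fun y : E6 => ptY y - f (y a)) x
    ((ptYL.hasFDerivAt (x := x)).sub (pdv_comp hd a x)).differentiableAt (sub_ne_zero.2 hx),
    pdvY hd, pdvY hd]
  rfl

lemma formY' {f : ℝ → E3} (hf : IsLongKnot f) (g : E3 → ℝ) (x : E6) (a : Fin 6)
    (hx : ptY x ≠ f (x a)) (i j : Fin 6) :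
    form2 g (fun y => unitv (f (y a) - ptY y)) x i j =
      (- g (unitv (f (x a) - ptY x)) * ‖ptY x - f (x a)‖⁻¹ ^ 3) *
        det3 (ptY x - f (x a)) (TT f x a i) (TT f x a j) := by
  have hd : Differentiable ℝ f := hf.1.differentiable (by simp)
  rw [form2_unitv g (fun y : E6 => f (y a) - ptY y) x
    ((pdv_comp hd a x).sub (ptYL.hasFDerivAt (x := x))).differentiableAt (sub_ne_zero.2 hx.symm),
    pdvY' hd, pdvY' hd, norm_sub_rev (f (x a))]
  simp only [TT, det3, PiLp.sub_apply, PiLp.neg_apply]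
  ring

lemma det3_anti (a b c : E3) : det3 a b c = - det3 a c b := by unfold det3; ring

lemma TT_zero (f : ℝ → E3) (x : E6) (a i : Fin 6) (h : a ≠ i) (hi : i = 0 ∨ i = 1 ∨ i = 2) :
    TT f x a i = 0 := by
  unfold TT
  rw [if_neg h, sub_zero]
  rcases hi with rfl | rfl | rfl <;> (ext k; fin_cases k <;> simp [ptY, mk3])

lemma det3_zero (a c : E3) : det3 a 0 c = 0 := by simp [det3]

lemma det3_TT (f : ℝ → E3) (x : E6) (a : Fin 6) (ha : a = 0 ∨ a = 1 ∨ a = 2) :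
    det3 (ptY x - f (x a)) (TT f x a a) (TT f x a 3) = - WY f (ptY x) (x a) 0 ∧
    det3 (ptY x - f (x a)) (TT f x a a) (TT f x a 4) = - WY f (ptY x) (x a) 1 ∧
    det3 (ptY x - f (x a)) (TT f x a a) (TT f x a 5) = - WY f (ptY x) (x a) 2 := by
  have h : TT f x a a = - deriv f (x a) := by
    unfold TT
    rw [if_pos rfl]
    have : ptY (EuclideanSpace.single a 1) = 0 := by
      rcases ha with rfl | rfl | rfl <;> (ext k; fin_cases k <;> simp [ptY, mk3])
    rw [this, zero_sub]
  have h3 : TT f x a 3 = mk3 1 0 0 := by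
    unfold TT
    rw [if_neg (by rcases ha with rfl | rfl | rfl <;> decide), sub_zero]
    ext k; fin_cases k <;> simp [ptY, mk3]
  have h4 : TT f x a 4 = mk3 0 1 0 := by
    unfold TT
    rw [if_neg (by rcases ha with rfl | rfl | rfl <;> decide), sub_zero]
    ext k; fin_cases k <;> simp [ptY, mk3]
  have h5 : TT f x a 5 = mk3 0 0 1 := by
    unfold TT
    rw [if_neg (by rcases ha with rfl | rfl | rfl <;> decide), sub_zero]
    ext k; fin_cases k <;> simp [ptY, mk3]
  rw [h, h3, h4, h5]
  simp only [WY, cr, det3, mk3_0, mk3_1, mk3_2, PiLp.neg_apply]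
  refine ⟨by ring, by ring, by ring⟩

lemma omegaY_le {f : ℝ → E3} (hf : IsLongKnot f) {g : E3 → ℝ} {G : ℝ}
    (hG : ∀ v : E3, ‖v‖ = 1 → |g v| ≤ G) (hG0 : 0 ≤ G) (x : E6) (hx : x ∈ CY f) :
    |omegaY f g x| ≤ G ^ 3 * (‖ptY x - f (x 0)‖⁻¹ ^ 3 * ‖ptY x - f (x 1)‖⁻¹ ^ 3 *
      ‖ptY x - f (x 2)‖⁻¹ ^ 3 *
      |det3 (WY f (ptY x) (x 0)) (WY f (ptY x) (x 1)) (WY f (ptY x) (x 2))|) := by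
  obtain ⟨-, -, h0, h1, h2⟩ := hx
  have e : omegaY f g x = (1 / 8) * SS
      (fun i j => form2 g (fun y => unitv (ptY y - f (y 0))) x i j)
      (fun i j => form2 g (fun y => unitv (f (y 1) - ptY y)) x i j)
      (fun i j => form2 g (fun y => unitv (ptY y - f (y 2))) x i j) := rfl
  simp only [formY hf g x 0 h0, formY' hf g x 1 h1, formY hf g x 2 h2] at e
  have g0 := hG _ (norm_unitv (sub_ne_zero.2 h0))
  have g1 := hG _ (norm_unitv (sub_ne_zero.2 h1.symm))
  have g2 := hG _ (norm_unitv (sub_ne_zero.2 h2))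
  rw [SS_eq] at e
  rotate_left
  · intro i j; rw [det3_anti]; ring
  · intro i j; rw [det3_anti]; ring
  · intro i j; rw [det3_anti]; ring
  · intro i; rw [TT_zero f x 0 1 (by decide) (by decide), det3_zero]; ring
  · intro i; rw [TT_zero f x 0 2 (by decide) (by decide), det3_zero]; ring
  · intro i; rw [TT_zero f x 1 0 (by decide) (by decide), det3_zero]; ring
  · intro i; rw [TT_zero f x 1 2 (by decide) (by decide), det3_zero]; ring
  · intro i; rw [TT_zero f x 2 0 (by decide) (by decide), det3_zero]; ring
  · intro i; rw [TT_zero f x 2 1 (by decide) (by decide), det3_zero]; ring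
  obtain ⟨a3, a4, a5⟩ := det3_TT f x 0 (by decide)
  obtain ⟨b3, b4, b5⟩ := det3_TT f x 1 (by decide)
  obtain ⟨c3, c4, c5⟩ := det3_TT f x 2 (by decide)
  rw [a3, a4, a5, b3, b4, b5, c3, c4, c5] at e
  have e' : omegaY f g x = -(g (unitv (ptY x - f (x 0))) * g (unitv (f (x 1) - ptY x)) *
      g (unitv (ptY x - f (x 2)))) * (‖ptY x - f (x 0)‖⁻¹ ^ 3 * ‖ptY x - f (x 1)‖⁻¹ ^ 3 *
      ‖ptY x - f (x 2)‖⁻¹ ^ 3 *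
      det3 (WY f (ptY x) (x 0)) (WY f (ptY x) (x 1)) (WY f (ptY x) (x 2))) := by
    rw [e]; unfold det3; ring
  rw [e', abs_mul, abs_neg, abs_mul, abs_mul, abs_mul, abs_of_nonneg (a := ‖ptY x - f (x 0)‖⁻¹ ^ 3 * ‖ptY x - f (x 1)‖⁻¹ ^ 3 * ‖ptY x - f (x 2)‖⁻¹ ^ 3) (by positivity)]
  refine mul_le_mul_of_nonneg_right ?_ (by positivity)
  calc _ ≤ G * G * G := by gcongr
    _ = G ^ 3 := by ring

theorem integrable_comp_lin {E F : Type*} [NormedAddCommGroup E] [NormedSpace ℝ E]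
    [FiniteDimensional ℝ E] [MeasurableSpace E] [BorelSpace E]
    [NormedAddCommGroup F] [NormedSpace ℝ F]
    [FiniteDimensional ℝ F] [MeasurableSpace F] [BorelSpace F]
    (μ : Measure E) [μ.IsAddHaarMeasure] (ν : Measure F) [ν.IsAddHaarMeasure]
    (e : E →ₗ[ℝ] F) (hi : Function.Injective e)
    (hd : Module.finrank ℝ E = Module.finrank ℝ F) {φ : F → ℝ}
    (h : Integrable φ ν) : Integrable (fun x => φ (e x)) μ := by
  let L : E ≃L[ℝ] F := (LinearEquiv.ofInjectiveOfFinrankEq e hi hd).toContinuousLinearEquiv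
  have hL : ∀ x, L x = e x := fun x => rfl
  have h1 : (μ.map L).IsAddHaarMeasure := L.isAddHaarMeasure_map μ
  have h2 := Measure.isAddLeftInvariant_eq_smul (μ.map L) ν
  have h3 : Integrable φ (μ.map L) := by
    rw [h2]
    exact h.smul_measure_nnreal
  have h4 := (integrable_map_measure h3.aestronglyMeasurable
    L.continuous.measurable.aemeasurable).1 h3
  exact h4

theorem integrableOn_radial {α β : ℝ} (hα : α < 1) (hβ : 0 ≤ β) (hab : 1 < α + β) :
    IntegrableOn (fun r : ℝ => r ^ (-α) * (1 + r) ^ (-β)) (Ioi 0) := by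
  have hm : Measurable (fun r : ℝ => r ^ (-α) * (1 + r) ^ (-β)) := by fun_prop
  rw [← Ioc_union_Ioi_eq_Ioi (zero_le_one' ℝ)]
  refine IntegrableOn.union ?_ ?_
  · have h1 : IntegrableOn (fun r : ℝ => r ^ (-α)) (Ioc 0 1) := by
      have := intervalIntegral.intervalIntegrable_rpow' (a := 0) (b := 1) (r := -α) (by linarith)
      rwa [intervalIntegrable_iff_integrableOn_Ioc_of_le zero_le_one] at this
    refine Integrable.mono' h1 hm.aestronglyMeasurable ?_
    filter_upwards [ae_restrict_mem measurableSet_Ioc] with r hr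
    have hr0 : 0 < r := hr.1
    have h2 : 0 ≤ r ^ (-α) := Real.rpow_nonneg hr0.le _
    have h3 : (1 + r) ^ (-β) ≤ 1 := Real.rpow_le_one_of_one_le_of_nonpos (by linarith) (by linarith)
    have h4 : 0 ≤ (1 + r) ^ (-β) := Real.rpow_nonneg (by linarith) _
    rw [Real.norm_of_nonneg (mul_nonneg h2 h4)]
    nlinarith
  · have h1 : IntegrableOn (fun r : ℝ => r ^ (-α - β)) (Ioi 1) :=
      integrableOn_Ioi_rpow_of_lt (by linarith) one_pos
    refine Integrable.mono' h1 hm.aestronglyMeasurable ?_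
    filter_upwards [ae_restrict_mem measurableSet_Ioi] with r hr
    have hr0 : 1 < r := hr
    have h2 : 0 ≤ r ^ (-α) := Real.rpow_nonneg (by linarith) _
    have h3 : (1 + r) ^ (-β) ≤ r ^ (-β) :=
      Real.rpow_le_rpow_of_nonpos (by linarith) (by linarith) (by linarith)
    have h4 : 0 ≤ (1 + r) ^ (-β) := Real.rpow_nonneg (by linarith) _
    rw [Real.norm_of_nonneg (mul_nonneg h2 h4), sub_eq_add_neg, Real.rpow_add (by linarith)]
    exact mul_le_mul_of_nonneg_left h3 h2

/-- first half of the splitting of `1 / (s (1 + s))` -/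
def m1 (s : ℝ) : ℝ := s ^ (-(1 / 4) : ℝ) * (1 + s) ^ (-(1 / 2) : ℝ)
/-- second half of the splitting of `1 / (s (1 + s))` -/
def m2 (s : ℝ) : ℝ := s ^ (-(3 / 4) : ℝ) * (1 + s) ^ (-(1 / 2) : ℝ)
/-- radial kernel on `ℝ³` -/
def KK (r : ℝ) : ℝ := r ^ (-(5 / 2) : ℝ) * (1 + r) ^ (-1 : ℝ)

theorem m1_nonneg {s : ℝ} (h : 0 ≤ s) : 0 ≤ m1 s :=
  mul_nonneg (Real.rpow_nonneg h _) (Real.rpow_nonneg (by linarith) _)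
theorem m2_nonneg {s : ℝ} (h : 0 ≤ s) : 0 ≤ m2 s :=
  mul_nonneg (Real.rpow_nonneg h _) (Real.rpow_nonneg (by linarith) _)
theorem KK_nonneg {s : ℝ} (h : 0 ≤ s) : 0 ≤ KK s :=
  mul_nonneg (Real.rpow_nonneg h _) (Real.rpow_nonneg (by linarith) _)

theorem m1_anti {s t : ℝ} (hs : 0 < s) (h : s ≤ t) : m1 t ≤ m1 s :=
  mul_le_mul (Real.rpow_le_rpow_of_nonpos hs h (by norm_num))
    (Real.rpow_le_rpow_of_nonpos (by linarith) (by linarith) (by norm_num))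
    (Real.rpow_nonneg (by linarith) _) (Real.rpow_nonneg hs.le _)
theorem m2_anti {s t : ℝ} (hs : 0 < s) (h : s ≤ t) : m2 t ≤ m2 s :=
  mul_le_mul (Real.rpow_le_rpow_of_nonpos hs h (by norm_num))
    (Real.rpow_le_rpow_of_nonpos (by linarith) (by linarith) (by norm_num))
    (Real.rpow_nonneg (by linarith) _) (Real.rpow_nonneg hs.le _)

theorem m1_mul_m2 {s : ℝ} (hs : 0 < s) : m1 s * m2 s = s⁻¹ * (1 + s)⁻¹ := by
  unfold m1 m2
  have h1 : s⁻¹ = s ^ (-(1 / 4) : ℝ) * s ^ (-(3 / 4) : ℝ) := by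
    rw [← Real.rpow_add hs, ← Real.rpow_neg_one]; norm_num
  have h2 : (1 + s)⁻¹ = (1 + s) ^ (-(1 / 2) : ℝ) * (1 + s) ^ (-(1 / 2) : ℝ) := by
    rw [← Real.rpow_add (by linarith), ← Real.rpow_neg_one]; norm_num
  rw [h1, h2]; ring

theorem KK_eq {s : ℝ} (hs : 0 < s) : KK s = s⁻¹ ^ 2 * (m1 s * m1 s) := by
  unfold m1 KK
  have h1 : s ^ (-(5 / 2) : ℝ) = s⁻¹ ^ 2 * (s ^ (-(1 / 4) : ℝ) * s ^ (-(1 / 4) : ℝ)) := by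
    rw [← Real.rpow_add hs, ← Real.rpow_neg_one, ← Real.rpow_natCast, ← Real.rpow_mul hs.le,
      ← Real.rpow_add hs]; norm_num
  have h2 : (1 + s) ^ (-1 : ℝ) = (1 + s) ^ (-(1 / 2) : ℝ) * (1 + s) ^ (-(1 / 2) : ℝ) := by
    rw [← Real.rpow_add (by linarith)]; norm_num
  rw [h1, h2]; ring

theorem integrable_m2 {c : ℝ} (hc : 0 < c) : Integrable (fun x : ℝ => m2 (c * |x|)) := by
  have h : Integrable (fun x : ℝ => m2 ‖x‖) := by
    rw [integrable_fun_norm_addHaar volume (f := m2)]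
    simpa [m2] using integrableOn_radial (α := 3/4) (β := 1/2) (by norm_num) (by norm_num)
      (by norm_num)
  have := h.comp_mul_left' hc.ne'
  refine this.congr (ae_of_all _ fun x => ?_)
  simp [abs_mul, abs_of_pos hc]

theorem integrable_KK : Integrable (fun x : E3 => KK ‖x‖) := by
  rw [integrable_fun_norm_addHaar volume (f := KK)]
  refine (integrableOn_radial (α := 1/2) (β := 1) (by norm_num) (by norm_num)
      (by norm_num)).congr_fun ?_ measurableSet_Ioi
  intro r hr
  have hr : 0 < r := hr
  have h1 : r ^ (-(1/2) : ℝ) = r ^ 2 * r ^ (-(5 / 2) : ℝ) := by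
    rw [← Real.rpow_natCast, ← Real.rpow_add hr]; norm_num
  simp only [KK, finrank_euclideanSpace, Fintype.card_fin, smul_eq_mul]
  rw [h1]; norm_num [mul_assoc]

/-- indicator of `[-1,1]` -/
def chi (x : ℝ) : ℝ := (Icc (-1 : ℝ) 1).indicator (fun _ => 1) x

theorem chi_nonneg (x : ℝ) : 0 ≤ chi x := indicator_nonneg (fun _ _ => zero_le_one) x
theorem chi_one {x : ℝ} (h : |x| ≤ 1) : chi x = 1 :=
  indicator_of_mem (s := Icc (-1 : ℝ) 1) (abs_le.1 h) (fun _ => (1 : ℝ))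
theorem integrable_chi : Integrable chi := by
  refine (integrable_indicator_iff measurableSet_Icc).2 ?_
  exact integrableOn_const (by simp)

theorem integrable_shift {Y : Type*} [MeasurableSpace Y] (μ : Measure Y) [SFinite μ]
    {A : Y → ℝ} (hA : Integrable A μ) {h : Y → E3} (hh : Measurable h)
    {k : E3 → ℝ} (hk : Integrable k) :
    Integrable (fun z : Y × E3 => A z.1 * k (z.2 - h z.1)) (μ.prod volume) := by
  have h1 : MeasurePreserving (fun z : Y × E3 => (z.1, z.2 - h z.1)) (μ.prod volume)
      (μ.prod volume) := by
    refine (MeasurePreserving.id μ).skew_product (g := fun y p => p - h y)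
      (by unfold Function.uncurry; fun_prop)
      (ae_of_all _ fun y => ?_)
    exact (measurePreserving_sub_right volume (h y)).map_eq
  exact h1.integrable_comp_of_integrable (hA.mul_prod hk)

/-- dominating kernel for the `X` integral -/
def BX (s t : ℝ) : ℝ := (chi s + chi t) * (1 + (t - s) ^ 2)⁻¹

theorem integrable_BX : Integrable (fun z : ℝ × ℝ => BX z.1 z.2) (volume.prod volume) := by
  have h0 : Integrable (fun z : ℝ × ℝ => chi z.1 * (1 + z.2 ^ 2)⁻¹) (volume.prod volume) :=
    integrable_chi.mul_prod integrable_inv_one_add_sq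
  let e1 : ℝ × ℝ →ₗ[ℝ] ℝ × ℝ := (LinearMap.fst ℝ ℝ ℝ).prod (LinearMap.snd ℝ ℝ ℝ - LinearMap.fst ℝ ℝ ℝ)
  let e2 : ℝ × ℝ →ₗ[ℝ] ℝ × ℝ := (LinearMap.snd ℝ ℝ ℝ).prod (LinearMap.snd ℝ ℝ ℝ - LinearMap.fst ℝ ℝ ℝ)
  have i1 : Function.Injective e1 := by
    rintro ⟨a, b⟩ ⟨c, d⟩ h
    have h' : (a, b - a) = (c, d - c) := h
    simp only [Prod.mk.injEq] at h' ⊢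
    obtain ⟨u, v⟩ := h'
    constructor <;> linarith
  have i2 : Function.Injective e2 := by
    rintro ⟨a, b⟩ ⟨c, d⟩ h
    have h' : (b, b - a) = (d, d - c) := h
    simp only [Prod.mk.injEq] at h' ⊢
    obtain ⟨u, v⟩ := h'
    constructor <;> linarith
  have a1 := integrable_comp_lin (volume.prod volume) (volume.prod volume) e1 i1 rfl h0
  have a2 := integrable_comp_lin (volume.prod volume) (volume.prod volume) e2 i2 rfl h0
  refine (a1.add a2).congr (ae_of_all _ fun z => ?_)
  simp [e1, e2, BX]
  ring

theorem integrable_BX4 : Integrable (fun x : E4 => BX (x 0) (x 2) * BX (x 1) (x 3)) := by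
  have h := integrable_BX.mul_prod integrable_BX
  let e : E4 →ₗ[ℝ] (ℝ × ℝ) × (ℝ × ℝ) :=
    { toFun := fun x => ((x 0, x 2), (x 1, x 3))
      map_add' := fun x y => rfl
      map_smul' := fun r x => rfl }
  have hi : Function.Injective e := by
    intro x y h'
    have h : ((x 0, x 2), (x 1, x 3)) = ((y 0, y 2), (y 1, y 3)) := h'
    simp only [Prod.mk.injEq] at h
    ext i
    fin_cases i
    exacts [h.1.1, h.2.1, h.1.2, h.2.2]
  haveI : ((volume.prod volume).prod (volume.prod volume) :
      Measure ((ℝ × ℝ) × (ℝ × ℝ))).IsAddHaarMeasure := Measure.prod.instIsAddHaarMeasure _ _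
  exact integrable_comp_lin volume ((volume.prod volume).prod (volume.prod volume)) e hi
    (by simp) h

/-- the dominating terms for the `Y` integral -/
def PH1 (f : ℝ → E3) (c : ℝ) (p : E3) (a b d : ℝ) : ℝ :=
  KK ‖p - f a‖ * m2 (c * |b - a|) * m2 (c * |d - a|) * (chi a + chi b)

theorem integrable_PH1 {f : ℝ → E3} (hf : Continuous f) {c : ℝ} (hc : 0 < c)
    (i j k : Fin 6) (H : ∀ l : Fin 6, l = i ∨ l = j ∨ l = k ∨ l = 3 ∨ l = 4 ∨ l = 5) :
    Integrable (fun x : E6 => PH1 f c (ptY x) (x i) (x j) (x k)) := by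
  have hA : Integrable (fun z : ℝ × (ℝ × ℝ) => chi z.1 * (m2 (c * |z.2.1|) * m2 (c * |z.2.2|)))
      (volume.prod (volume.prod volume)) :=
    integrable_chi.mul_prod ((integrable_m2 hc).mul_prod (integrable_m2 hc))
  have h1 := integrable_shift _ hA (h := fun z => f z.1) (by fun_prop) integrable_KK
  have h2 := integrable_shift _ hA (h := fun z => f (z.1 + z.2.1)) (by fun_prop) integrable_KK
  have hpt0 : ∀ x : E6, ptY x 0 = x 3 := fun x => rfl
  have hpt1 : ∀ x : E6, ptY x 1 = x 4 := fun x => rfl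
  have hpt2 : ∀ x : E6, ptY x 2 = x 5 := fun x => rfl
  have padd : ∀ x y : E6, ptY (x + y) = ptY x + ptY y := by
    intro x y
    ext l
    fin_cases l <;> rfl
  have psmul : ∀ (r : ℝ) (x : E6), ptY (r • x) = r • ptY x := by
    intro r x
    ext l
    fin_cases l <;> rfl
  let e1 : E6 →ₗ[ℝ] (ℝ × (ℝ × ℝ)) × E3 :=
    { toFun := fun x => ((x i, (x j - x i, x k - x i)), ptY x)
      map_add' := fun x y => by
        simp [padd]; constructor <;> ring
      map_smul' := fun r x => by
        simp [psmul]; constructor <;> ring }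
  let e2 : E6 →ₗ[ℝ] (ℝ × (ℝ × ℝ)) × E3 :=
    { toFun := fun x => ((x j, (x i - x j, x k - x i)), ptY x)
      map_add' := fun x y => by
        simp [padd]; constructor <;> ring
      map_smul' := fun r x => by
        simp [psmul]; constructor <;> ring }
  have key : ∀ x y : E6, x i = y i → x j = y j → x k = y k → ptY x = ptY y → x = y := by
    intro x y hi hj hk hp
    have q0 : x 3 = y 3 := congrArg (fun v : E3 => v 0) hp
    have q1 : x 4 = y 4 := congrArg (fun v : E3 => v 1) hp
    have q2 : x 5 = y 5 := congrArg (fun v : E3 => v 2) hp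
    ext l
    rcases H l with rfl | rfl | rfl | rfl | rfl | rfl <;> assumption
  have i1 : Function.Injective e1 := by
    intro x y h
    simp only [e1, LinearMap.coe_mk, AddHom.coe_mk, Prod.mk.injEq] at h
    obtain ⟨⟨ha, hb, hd⟩, hp⟩ := h
    exact key x y (by linarith) (by linarith) (by linarith) hp
  have i2 : Function.Injective e2 := by
    intro x y h
    simp only [e2, LinearMap.coe_mk, AddHom.coe_mk, Prod.mk.injEq] at h
    obtain ⟨⟨ha, hb, hd⟩, hp⟩ := h
    exact key x y (by linarith) (by linarith) (by linarith) hp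
  haveI : (volume.prod (volume.prod volume) :
      Measure (ℝ × (ℝ × ℝ))).IsAddHaarMeasure := Measure.prod.instIsAddHaarMeasure _ _
  haveI : ((volume.prod (volume.prod volume)).prod volume :
      Measure ((ℝ × (ℝ × ℝ)) × E3)).IsAddHaarMeasure := Measure.prod.instIsAddHaarMeasure _ _
  have a1 := integrable_comp_lin volume ((volume.prod (volume.prod volume)).prod volume) e1 i1
    (by simp) h1
  have a2 := integrable_comp_lin volume ((volume.prod (volume.prod volume)).prod volume) e2 i2
    (by simp) h2
  refine (a1.add a2).congr (ae_of_all _ fun x => ?_)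
  simp only [e1, e2, PH1, LinearMap.coe_mk, AddHom.coe_mk, Pi.add_apply]
  rw [abs_sub_comm (x i) (x j), add_sub_cancel]
  ring

theorem BX_nonneg (s t : ℝ) : 0 ≤ BX s t :=
  mul_nonneg (add_nonneg (chi_nonneg s) (chi_nonneg t)) (by positivity)

theorem chi_add {s t : ℝ} (h : |s| ≤ 1 ∨ |t| ≤ 1) : 1 ≤ chi s + chi t := by
  rcases h with h | h
  · have := chi_nonneg t
    rw [chi_one h]; linarith
  · have := chi_nonneg s
    rw [chi_one h]; linarith

theorem FX_nonneg (f : ℝ → E3) (s t : ℝ) : 0 ≤ FX f s t := by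
  unfold FX; positivity

theorem FX_le {f : ℝ → E3} {L c : ℝ} (K : KC f L c) {s t : ℝ} (hst : s ≠ t) :
    FX f s t ≤ 12 * L ^ 3 / c ^ 3 * BX s t := by
  have L1 := K.L1
  have L0 : 0 ≤ L := by linarith
  have c0 := K.c0
  by_cases hs : |s| ≤ 1 ∨ |t| ≤ 1
  swap
  · push Not at hs
    have : det3 (f t - f s) (deriv f s) (deriv f t) = 0 := by
      rw [K.str s hs.1, K.str t hs.2]; simp only [det3, mk3_0, mk3_1, mk3_2]; ring
    have h0 : FX f s t = 0 := by unfold FX; rw [this]; simp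
    rw [h0]
    exact mul_nonneg (by positivity) (BX_nonneg s t)
  set r := |t - s| with hr
  have r0 : 0 < r := abs_pos.2 (sub_ne_zero.2 hst.symm)
  have hn := K.low s t
  have hn2 := K.lip s t
  set D := |det3 (f t - f s) (deriv f s) (deriv f t)| with hD
  have D0 : 0 ≤ D := abs_nonneg _
  have d1 : D ≤ 6 * L ^ 3 * r := by
    calc D ≤ 6 * ‖f t - f s‖ * ‖deriv f s‖ * ‖deriv f t‖ := det3_le _ _ _
      _ ≤ 6 * (L * r) * L * L := by
          have := K.d1 s
          have := K.d1 t
          gcongr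
      _ = _ := by ring
  have d3 : D ≤ 6 * L ^ 3 * r ^ 3 := by
    have e : det3 (f t - f s) (deriv f s) (deriv f t) =
        det3 (f t - f s - (t - s) • deriv f s) (deriv f s) (deriv f t - deriv f s) := by
      simp only [det3, PiLp.sub_apply, PiLp.smul_apply, smul_eq_mul]; ring
    rw [hD, e]
    calc _ ≤ 6 * ‖f t - f s - (t - s) • deriv f s‖ * ‖deriv f s‖ * ‖deriv f t - deriv f s‖ :=
          det3_le _ _ _
      _ ≤ 6 * (L * r * r) * L * (L * r) := by
          have := K.d1 s
          have := K.d2 s t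
          have := K.tay s t
          gcongr
      _ = _ := by ring
  have n1 : ‖f t - f s‖⁻¹ ≤ (c * r)⁻¹ := by gcongr
  have n0 : 0 ≤ ‖f t - f s‖⁻¹ := by positivity
  have main : (c * r)⁻¹ ^ 3 * D ≤ 12 * L ^ 3 / c ^ 3 * (1 + r ^ 2)⁻¹ := by
    have e : (c * r)⁻¹ ^ 3 * D = D / (c ^ 3 * r ^ 3) := by
      field_simp
    have e2 : 12 * L ^ 3 / c ^ 3 * (1 + r ^ 2)⁻¹ = 12 * L ^ 3 / (c ^ 3 * (1 + r ^ 2)) := by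
      field_simp
    rw [e, e2, div_le_div_iff₀ (by positivity) (by positivity)]
    have : D * (1 + r ^ 2) ≤ 12 * L ^ 3 * r ^ 3 := by
      have := mul_le_mul_of_nonneg_right d1 (sq_nonneg r)
      nlinarith
    calc D * (c ^ 3 * (1 + r ^ 2)) = c ^ 3 * (D * (1 + r ^ 2)) := by ring
      _ ≤ c ^ 3 * (12 * L ^ 3 * r ^ 3) := by gcongr
      _ = _ := by ring
  have hB : (1 + r ^ 2)⁻¹ ≤ BX s t := by
    unfold BX
    rw [hr, sq_abs]
    have : (0 : ℝ) ≤ (1 + (t - s) ^ 2)⁻¹ := by positivity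
    nlinarith [chi_add hs]
  calc FX f s t = ‖f t - f s‖⁻¹ ^ 3 * D := rfl
    _ ≤ (c * r)⁻¹ ^ 3 * D := by gcongr
    _ ≤ _ := main
    _ ≤ _ := by gcongr

theorem W_norm {f : ℝ → E3} {L c : ℝ} (K : KC f L c) (p : E3) (a : ℝ) :
    ‖WY f p a‖ ≤ 6 * L * ‖p - f a‖ := by
  have L0 : 0 ≤ L := by linarith [K.L1]
  calc ‖WY f p a‖ ≤ 6 * ‖p - f a‖ * ‖deriv f a‖ := norm_cr_le _ _
    _ ≤ 6 * ‖p - f a‖ * L := by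
        have := K.d1 a
        gcongr
    _ = _ := by ring

theorem W_diff {f : ℝ → E3} {L c : ℝ} (K : KC f L c) (p : E3) (a b : ℝ)
    (hab : ‖p - f a‖ ≤ ‖p - f b‖) :
    ‖WY f p b - WY f p a‖ * (1 + ‖p - f b‖) ≤
      (12 * L + 12 * L / c + 24 * L ^ 2 / c ^ 2) * ‖p - f b‖ ^ 2 ∧
    c / 2 * |b - a| ≤ ‖p - f b‖ := by
  have L0 : 0 ≤ L := by linarith [K.L1]
  have c0 := K.c0
  set s := ‖p - f b‖ with hs
  have s0 : 0 ≤ s := norm_nonneg _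
  set r := |b - a| with hr
  have r0 : 0 ≤ r := abs_nonneg _
  have hr2 : c * r ≤ 2 * s := by
    have h1 := K.low a b
    have h2 : ‖f b - f a‖ ≤ ‖p - f a‖ + ‖p - f b‖ := by
      have : f b - f a = (p - f a) - (p - f b) := by abel
      rw [this]; exact norm_sub_le _ _
    linarith
  refine ⟨?_, by linarith⟩
  set X := ‖WY f p b - WY f p a‖ with hX
  have x1 : X ≤ 12 * L * s := by
    have h1 := W_norm K p a
    have h2 := W_norm K p b
    have h3 := norm_sub_le (WY f p b) (WY f p a)
    have h4 : 6 * L * ‖p - f a‖ ≤ 6 * L * s := by gcongr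
    linarith
  have x2 : X ≤ (12 * L / c + 24 * L ^ 2 / c ^ 2) * s ^ 2 := by
    have e : WY f p b - WY f p a = cr (p - f a) (deriv f b - deriv f a) +
        cr (f a - f b - (a - b) • deriv f b) (deriv f b) := by
      ext i
      fin_cases i <;>
        simp [WY, cr, mk3] <;> ring
    have y1 : ‖cr (p - f a) (deriv f b - deriv f a)‖ ≤ 6 * s * (L * r) := by
      refine (norm_cr_le _ _).trans ?_
      have := K.d2 a b
      gcongr
    have y2 : ‖cr (f a - f b - (a - b) • deriv f b) (deriv f b)‖ ≤ 6 * (L * r * r) * L := by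
      refine (norm_cr_le _ _).trans ?_
      have h1 := K.tay b a
      rw [abs_sub_comm a b] at h1
      have := K.d1 b
      gcongr
    have hrs : r ≤ 2 * s / c := by
      rw [le_div_iff₀ c0]; linarith
    calc X ≤ 6 * s * (L * r) + 6 * (L * r * r) * L := by
          rw [hX, e]; exact (norm_add_le _ _).trans (add_le_add y1 y2)
      _ ≤ 6 * s * (L * (2 * s / c)) + 6 * (L * (2 * s / c) * (2 * s / c)) * L := by gcongr
      _ = _ := by field_simp; ring
  nlinarith [mul_le_mul_of_nonneg_right x1 s0]

/-- the bound for the `Y` integrand -/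
def DY (f : ℝ → E3) (p : E3) (a b d : ℝ) : ℝ :=
  ‖p - f a‖⁻¹ ^ 3 * ‖p - f b‖⁻¹ ^ 3 * ‖p - f d‖⁻¹ ^ 3 *
    |det3 (WY f p a) (WY f p b) (WY f p d)|

theorem DY_swap (f : ℝ → E3) (p : E3) (a b d : ℝ) : DY f p a b d = DY f p b a d := by
  have : det3 (WY f p a) (WY f p b) (WY f p d) = - det3 (WY f p b) (WY f p a) (WY f p d) := by
    unfold det3; ring
  unfold DY; rw [this, abs_neg]; ring

theorem DY_swap' (f : ℝ → E3) (p : E3) (a b d : ℝ) : DY f p a b d = DY f p a d b := by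
  have : det3 (WY f p a) (WY f p b) (WY f p d) = - det3 (WY f p a) (WY f p d) (WY f p b) := by
    unfold det3; ring
  unfold DY; rw [this, abs_neg]; ring

theorem DY_le1 {f : ℝ → E3} {L c : ℝ} (K : KC f L c) {p : E3} {a b d : ℝ}
    (hb : b ≠ a) (hd : d ≠ a) (h0 : p ≠ f a)
    (hab : ‖p - f a‖ ≤ ‖p - f b‖) (had : ‖p - f a‖ ≤ ‖p - f d‖) :
    DY f p a b d ≤ 36 * L * (12 * L + 12 * L / c + 24 * L ^ 2 / c ^ 2) ^ 2 *
      (KK ‖p - f a‖ * m2 (c / 2 * |b - a|) * m2 (c / 2 * |d - a|)) := by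
  have L0 : 0 ≤ L := by linarith [K.L1]
  have c0 := K.c0
  obtain ⟨b1, b2⟩ := W_diff K p a b hab
  obtain ⟨d1, d2⟩ := W_diff K p a d had
  have e : det3 (WY f p a) (WY f p b) (WY f p d) =
      det3 (WY f p a) (WY f p b - WY f p a) (WY f p d - WY f p a) := by
    simp only [det3, PiLp.sub_apply]; ring
  have hdet := det3_le (WY f p a) (WY f p b - WY f p a) (WY f p d - WY f p a)
  rw [← e] at hdet
  have wa := W_norm K p a
  unfold DY
  generalize 12 * L + 12 * L / c + 24 * L ^ 2 / c ^ 2 = M at *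
  have va : 0 < ‖p - f a‖ := norm_pos_iff.2 (sub_ne_zero.2 h0)
  generalize ‖p - f a‖ = u at *
  generalize ‖p - f b‖ = v at *
  generalize ‖p - f d‖ = w at *
  have rb : 0 < c / 2 * |b - a| := mul_pos (by linarith) (abs_pos.2 (sub_ne_zero.2 hb))
  have rd : 0 < c / 2 * |d - a| := mul_pos (by linarith) (abs_pos.2 (sub_ne_zero.2 hd))
  generalize c / 2 * |b - a| = y at *
  generalize c / 2 * |d - a| = z at *
  have v0 : 0 < v := by linarith
  have w0 : 0 < w := by linarith
  have qb : ‖WY f p b - WY f p a‖ ≤ M * v ^ 2 / (1 + v) := by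
    rw [le_div_iff₀ (by linarith)]; exact b1
  have qd : ‖WY f p d - WY f p a‖ ≤ M * w ^ 2 / (1 + w) := by
    rw [le_div_iff₀ (by linarith)]; exact d1
  have M0 : 0 ≤ M * v ^ 2 / (1 + v) := (norm_nonneg _).trans qb
  calc _ ≤ u⁻¹ ^ 3 * v⁻¹ ^ 3 * w⁻¹ ^ 3 *
        (6 * (6 * L * u) * (M * v ^ 2 / (1 + v)) * (M * w ^ 2 / (1 + w))) := by
        refine mul_le_mul_of_nonneg_left (hdet.trans ?_) (by positivity)
        gcongr
    _ = 36 * L * M ^ 2 * (u⁻¹ ^ 2 * (v⁻¹ * (1 + v)⁻¹) * (w⁻¹ * (1 + w)⁻¹)) := by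
        field_simp; try ring
    _ = 36 * L * M ^ 2 * (u⁻¹ ^ 2 * (m1 v * m2 v) * (m1 w * m2 w)) := by
        rw [m1_mul_m2 v0, m1_mul_m2 w0]
    _ ≤ 36 * L * M ^ 2 * (u⁻¹ ^ 2 * (m1 u * m2 y) * (m1 u * m2 z)) := by
        have := m1_anti va hab
        have := m1_anti va had
        have := m2_anti rb b2
        have := m2_anti rd d2
        have := m1_nonneg va.le
        have := m1_nonneg v0.le
        have := m1_nonneg w0.le
        have := m2_nonneg rb.le
        have := m2_nonneg rd.le
        have := m2_nonneg v0.le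
        have := m2_nonneg w0.le
        gcongr
    _ = _ := by rw [KK_eq va]; ring

theorem PH1_nonneg (f : ℝ → E3) {c : ℝ} (hc : 0 ≤ c) (p : E3) (a b d : ℝ) :
    0 ≤ PH1 f c p a b d := by
  unfold PH1
  have := KK_nonneg (norm_nonneg (p - f a))
  have := m2_nonneg (mul_nonneg hc (abs_nonneg (b - a)))
  have := m2_nonneg (mul_nonneg hc (abs_nonneg (d - a)))
  have := chi_nonneg a
  have := chi_nonneg b
  positivity

theorem DY_le2 {f : ℝ → E3} {L c : ℝ} (K : KC f L c) {p : E3} {a b d : ℝ}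
    (hb : b ≠ a) (hd : d ≠ a) (h0 : p ≠ f a)
    (hab : ‖p - f a‖ ≤ ‖p - f b‖) (had : ‖p - f a‖ ≤ ‖p - f d‖) :
    DY f p a b d ≤ 36 * L * (12 * L + 12 * L / c + 24 * L ^ 2 / c ^ 2) ^ 2 *
      (PH1 f (c / 2) p a b d + PH1 f (c / 2) p a d b) := by
  have L0 : 0 ≤ L := by linarith [K.L1]
  have c0 := K.c0
  have h1 := DY_le1 K hb hd h0 hab had
  have C0 : 0 ≤ 36 * L * (12 * L + 12 * L / c + 24 * L ^ 2 / c ^ 2) ^ 2 := by positivity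
  have p1 := PH1_nonneg f (c := c / 2) (by linarith) p a b d
  have p2 := PH1_nonneg f (c := c / 2) (by linarith) p a d b
  generalize 36 * L * (12 * L + 12 * L / c + 24 * L ^ 2 / c ^ 2) ^ 2 = C at *
  by_cases hout : 1 < |a| ∧ 1 < |b| ∧ 1 < |d|
  · have hW : ∀ t, 1 < |t| → WY f p t = cr p (mk3 1 0 0) := by
      intro t ht
      unfold WY
      rw [K.str t ht, K.strf t ht]
      ext i
      fin_cases i <;> simp [cr, mk3]
    have : DY f p a b d = 0 := by
      unfold DY
      rw [hW a hout.1, hW b hout.2.1, hW d hout.2.2]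
      have : det3 (cr p (mk3 1 0 0)) (cr p (mk3 1 0 0)) (cr p (mk3 1 0 0)) = 0 := by
        unfold det3; ring
      rw [this]; simp
    rw [this]; positivity
  · refine h1.trans (mul_le_mul_of_nonneg_left ?_ C0)
    have k1 := KK_nonneg (norm_nonneg (p - f a))
    have k2 := m2_nonneg (mul_nonneg (by linarith : (0:ℝ) ≤ c / 2) (abs_nonneg (b - a)))
    have k3 := m2_nonneg (mul_nonneg (by linarith : (0:ℝ) ≤ c / 2) (abs_nonneg (d - a)))
    have hq : 0 ≤ KK ‖p - f a‖ * m2 (c / 2 * |b - a|) * m2 (c / 2 * |d - a|) := by positivity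
    by_cases hh : |a| ≤ 1 ∨ |b| ≤ 1
    · have := chi_add hh
      have : KK ‖p - f a‖ * m2 (c / 2 * |b - a|) * m2 (c / 2 * |d - a|) ≤
          PH1 f (c / 2) p a b d := by
        unfold PH1; nlinarith
      linarith
    · have hh2 : |a| ≤ 1 ∨ |d| ≤ 1 := by
        push Not at hh
        right
        by_contra hcon
        exact hout ⟨hh.1, hh.2, not_le.1 hcon⟩
      have := chi_add hh2
      have : KK ‖p - f a‖ * m2 (c / 2 * |b - a|) * m2 (c / 2 * |d - a|) ≤
          PH1 f (c / 2) p a d b := by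
        unfold PH1; nlinarith
      linarith

theorem DY_le3 {f : ℝ → E3} {L c : ℝ} (K : KC f L c) {p : E3} {a b d : ℝ}
    (hab : a ≠ b) (hbd : b ≠ d) (had : a ≠ d) (ha : p ≠ f a) (hb : p ≠ f b) (hd : p ≠ f d) :
    DY f p a b d ≤ 36 * L * (12 * L + 12 * L / c + 24 * L ^ 2 / c ^ 2) ^ 2 *
      ((PH1 f (c / 2) p a b d + PH1 f (c / 2) p a d b) +
       (PH1 f (c / 2) p b a d + PH1 f (c / 2) p b d a) +
       (PH1 f (c / 2) p d a b + PH1 f (c / 2) p d b a)) := by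
  have L0 : 0 ≤ L := by linarith [K.L1]
  have c0 := K.c0
  have c2 : 0 ≤ c / 2 := by linarith
  have C0 : 0 ≤ 36 * L * (12 * L + 12 * L / c + 24 * L ^ 2 / c ^ 2) ^ 2 := by positivity
  have p1 := PH1_nonneg f c2 p a b d
  have p2 := PH1_nonneg f c2 p a d b
  have p3 := PH1_nonneg f c2 p b a d
  have p4 := PH1_nonneg f c2 p b d a
  have p5 := PH1_nonneg f c2 p d a b
  have p6 := PH1_nonneg f c2 p d b a
  have hcases : (‖p - f a‖ ≤ ‖p - f b‖ ∧ ‖p - f a‖ ≤ ‖p - f d‖) ∨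
      (‖p - f b‖ ≤ ‖p - f a‖ ∧ ‖p - f b‖ ≤ ‖p - f d‖) ∨
      (‖p - f d‖ ≤ ‖p - f a‖ ∧ ‖p - f d‖ ≤ ‖p - f b‖) := by grind
  rcases hcases with ⟨h1, h2⟩ | ⟨h1, h2⟩ | ⟨h1, h2⟩
  · refine (DY_le2 K hab.symm had.symm ha h1 h2).trans (mul_le_mul_of_nonneg_left ?_ C0)
    linarith
  · rw [DY_swap]
    refine (DY_le2 K hab hbd.symm hb h1 h2).trans (mul_le_mul_of_nonneg_left ?_ C0)
    linarith
  · rw [DY_swap', DY_swap]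
    refine (DY_le2 K had hbd hd h1 h2).trans (mul_le_mul_of_nonneg_left ?_ C0)
    linarith

theorem measurableSet_CX : MeasurableSet CX := by
  have h := fun k : Fin 4 => (continuous_coord k).measurable
  exact (measurableSet_lt (h 0) (h 1)).inter
    ((measurableSet_lt (h 1) (h 2)).inter (measurableSet_lt (h 2) (h 3)))

theorem measurableSet_CY {f : ℝ → E3} (hf : Continuous f) : MeasurableSet (CY f) := by
  have h := fun k : Fin 6 => (continuous_coord k).measurable
  have hh := fun k : Fin 6 => (isOpen_ne_fun continuous_ptY
    (hf.comp (continuous_coord k))).measurableSet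
  exact (measurableSet_lt (h 0) (h 1)).inter ((measurableSet_lt (h 1) (h 2)).inter
    ((hh 0).inter ((hh 1).inter (hh 2))))

theorem main_thm (f : ℝ → E3) (hf : IsLongKnot f) (ε : ℝ)
    (g : E3 → ℝ) (hg : IsEtaForm ε g) :
    IntegrableOn (omegaX f g) CX volume ∧ IntegrableOn (omegaY f g) (CY f) volume := by
  have fc : Continuous f := hf.1.continuous
  have gc : Continuous g := hg.1.continuous
  obtain ⟨G, hG⟩ := (isCompact_sphere (0 : E3) 1).exists_bound_of_continuousOn gc.continuousOn
  have hG' : ∀ v : E3, ‖v‖ = 1 → |g v| ≤ max G 0 := fun v hv =>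
    (hG v (by simpa using hv)).trans (le_max_left _ _)
  have hG0 : 0 ≤ max G 0 := le_max_right _ _
  generalize max G 0 = G1 at hG' hG0
  obtain ⟨L, c, K⟩ := exists_KC hf
  have L0 : 0 ≤ L := by linarith [K.L1]
  have c0 := K.c0
  constructor
  · have hI := (integrable_BX4.const_mul (6 * G1 ^ 2 * (12 * L ^ 3 / c ^ 3) ^ 2)).integrableOn
      (s := CX)
    refine Integrable.mono' hI (measurable_omegaX fc gc).aestronglyMeasurable ?_
    filter_upwards [ae_restrict_mem measurableSet_CX] with x hx
    refine (omegaX_le hf hG' hG0 x hx).trans ?_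
    obtain ⟨h1, h2, h3⟩ := hx
    have a := FX_le K (s := x 0) (t := x 2) (by linarith : x 0 < x 2).ne
    have b := FX_le K (s := x 1) (t := x 3) (by linarith : x 1 < x 3).ne
    have := FX_nonneg f (x 0) (x 2)
    have := FX_nonneg f (x 1) (x 3)
    have := BX_nonneg (x 0) (x 2)
    calc _ ≤ 6 * G1 ^ 2 * ((12 * L ^ 3 / c ^ 3 * BX (x 0) (x 2)) *
          (12 * L ^ 3 / c ^ 3 * BX (x 1) (x 3))) := by gcongr
      _ = _ := by ring
  · have P := fun i j k H => integrable_PH1 fc (c := c / 2) (by linarith) i j k H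
    have hI := (((((P 0 1 2 (by decide)).add (P 0 2 1 (by decide))).add
      ((P 1 0 2 (by decide)).add (P 1 2 0 (by decide)))).add
      ((P 2 0 1 (by decide)).add (P 2 1 0 (by decide)))).const_mul
      (G1 ^ 3 * (36 * L * (12 * L + 12 * L / c + 24 * L ^ 2 / c ^ 2) ^ 2))).integrableOn
      (s := CY f)
    refine Integrable.mono' hI (measurable_omegaY fc gc).aestronglyMeasurable ?_
    filter_upwards [ae_restrict_mem (measurableSet_CY fc)] with x hx
    refine (omegaY_le hf hG' hG0 x hx).trans ?_
    obtain ⟨h1, h2, k0, k1, k2⟩ := hx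
    have := DY_le3 K (p := ptY x) (a := x 0) (b := x 1) (d := x 2) h1.ne h2.ne (h1.trans h2).ne
      k0 k1 k2
    have h3 := mul_le_mul_of_nonneg_left this (pow_nonneg hG0 3)
    rw [← mul_assoc] at h3
    exact h3

/-- convergence of the configuration space integrals for long knots.
For every long knot `f`, every `ε > 0` and every 2-form `η` as specified, the
configuration space integrals `I_X(f)` and `I_Y(f)` converge absolutely. -/
theorem statement4 (f : ℝ → E3) (hf : IsLongKnot f) (ε : ℝ) (hε : 0 < ε)
    (g : E3 → ℝ) (hg : IsEtaForm ε g) :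
    IntegrableOn (omegaX f g) CX volume ∧ IntegrableOn (omegaY f g) (CY f) volume := by
  exact main_thm f hf ε g hg
end
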